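/- arXiv:2202.07363 — 3 statements merged into one kernel-verified Lean document; each statement's English description precedes it below -/
import Mathlib

section
/- Let α ∈ (0,1) and set γ_α = 1/(2·Γ(α)·sin(π·(1−α)/2)). Then K_α is Lebesgue integrable on (−π, π), and there exists an even function g : (−π, π) → ℝ which is infinitely differentiable on (−π, π) such that K_α(x) = γ_α·|x|^(α−1) + g(x) for every x ∈ (−π, π) with x ≠ 0. -/
open Real MeasureTheory Set Filter Topology

/-- The periodic convolution kernel `K_α`: equal to the explicit integral
representation for `x ∉ 2πℤ` and to `0` on `2πℤ`. -/
noncomputable def Kker (α x : ℝ) : ℝ :=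
  letI : Decidable (∃ k : ℤ, x = 2 * π * k) := Classical.propDecidable _
  if ∃ k : ℤ, x = 2 * π * k then 0
  else (1 / (π * Real.Gamma α)) *
    ∫ t in Set.Ioi (0:ℝ),
      t ^ (α - 1) * (Real.exp t * Real.cos x - 1) /
        (1 - 2 * Real.exp t * Real.cos x + Real.exp (2 * t))

/-!
The integrand of `K_α` is `t ^ (α - 1) * Re (1 / (exp z - 1))` with `z = t + i x`. On the strip
`|Im z| < 2π` the only singularity of `1 / (exp z - 1)` is the simple pole `1 / z` at `0`. Its
contribution `∫ t ^ α / (t ^ 2 + x ^ 2) dt` reduces by `u = t ^ 2` to the integral of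
`u ^ (a - 1) / (u + c)`, which Euler's reflection formula evaluates, and this is the term
`γ_α * |x| ^ (α - 1)`. What remains, `h(z) = 1 / (exp z - 1) - 1 / z`, is holomorphic on the strip
and decays like `1 / Re z`, so `z ↦ ∫ t ^ (α - 1) * h(t + z) dt` is holomorphic there too. Since `h`
commutes with conjugation, the real part of this function is even along the imaginary axis.
-/

open scoped ComplexConjugate

theorem aestronglyMeasurable_deriv_of_eventually {X 𝕜 E : Type*} [MeasurableSpace X] {μ : Measure X}
    [NontriviallyNormedField 𝕜] [NormedAddCommGroup E] [NormedSpace 𝕜 E]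
    {F : 𝕜 → X → E} {z₀ : 𝕜} (hmeas : ∀ᶠ z in 𝓝 z₀, AEStronglyMeasurable (F z) μ)
    (hdiff : ∀ᵐ a ∂μ, DifferentiableAt 𝕜 (F · a) z₀) :
    AEStronglyMeasurable (fun a => deriv (F · a) z₀) μ := by
  obtain ⟨u, hu, hu_meas⟩ := exists_seq_forall_of_frequently
    (hmeas.filter_mono (nhdsWithin_le_nhds (s := {z₀}ᶜ))).frequently
  have hslope (n : ℕ) : AEStronglyMeasurable (fun a => slope (F · a) z₀ (u n)) μ :=
    ((hu_meas n).sub hmeas.self_of_nhds).const_smul (u n - z₀)⁻¹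
  refine aestronglyMeasurable_of_tendsto_ae atTop hslope ?_
  filter_upwards [hdiff] with a ha using ha.hasDerivAt.tendsto_slope.comp hu

theorem differentiableOn_integral_of_locally_dominated {X E : Type*} [MeasurableSpace X]
    {μ : Measure X} [NormedAddCommGroup E] [NormedSpace ℂ E] {F : ℂ → X → E} {U : Set ℂ}
    (hU : IsOpen U) (hmeas : ∀ z ∈ U, AEStronglyMeasurable (F z) μ)
    (hdiff : ∀ᵐ a ∂μ, DifferentiableOn ℂ (F · a) U)
    (hdom : ∀ z ∈ U, ∃ V ∈ 𝓝 z, ∃ bound : X → ℝ,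
      Integrable bound μ ∧ ∀ᵐ a ∂μ, ∀ w ∈ V, ‖F w a‖ ≤ bound a) :
    DifferentiableOn ℂ (fun z => ∫ a, F z a ∂μ) U := by
  intro z hz
  have hUz : U ∈ 𝓝 z := hU.mem_nhds hz
  obtain ⟨V, hV, bound, hbound_int, hbound⟩ := hdom z hz
  obtain ⟨R, hR, hball⟩ := Metric.nhds_basis_closedBall.mem_iff.1 (inter_mem hUz hV)
  have hr : 0 < R / 2 := half_pos hR
  have hsub {w : ℂ} (hw : w ∈ Metric.ball z (R / 2)) : Metric.closedBall w (R / 2) ⊆ U ∩ V :=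
    (Metric.closedBall_subset_closedBall' (by linarith [Metric.mem_ball.1 hw])).trans hball
  have hcauchy : ∀ᵐ a ∂μ, ∀ w ∈ Metric.ball z (R / 2), ‖deriv (F · a) w‖ ≤ bound a / (R / 2) := by
    filter_upwards [hdiff, hbound] with a hda hba w hw
    refine Complex.norm_deriv_le_of_forall_mem_sphere_norm_le hr ?_ fun v hv =>
      hba v (hsub hw (Metric.sphere_subset_closedBall hv)).2
    exact (hda.mono fun v hv => (hsub hw hv).1).diffContOnCl_ball subset_rfl
  have hderiv : ∀ᵐ a ∂μ, ∀ w ∈ Metric.ball z (R / 2),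
      HasDerivAt (F · a) (deriv (F · a) w) w := by
    filter_upwards [hdiff] with a hda w hw
    have hwU := (hsub hw (Metric.mem_closedBall_self hr.le)).1
    exact (hda.differentiableAt (hU.mem_nhds hwU)).hasDerivAt
  have hint : Integrable (F z) μ := by
    refine hbound_int.mono' (hmeas z hz) ?_
    filter_upwards [hbound] with a hba using hba z (mem_of_mem_nhds hV)
  have hmeas' : AEStronglyMeasurable (fun a => deriv (F · a) z) μ :=
    aestronglyMeasurable_deriv_of_eventually (eventually_of_mem hUz hmeas)
      (hdiff.mono fun a hda => hda.differentiableAt hUz)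
  exact (hasDerivAt_integral_of_dominated_loc_of_deriv_le (Metric.ball_mem_nhds z hr)
    (eventually_of_mem hUz hmeas) hint hmeas' hcauchy (hbound_int.div_const _)
    hderiv).2.differentiableAt.differentiableWithinAt

section RpowIntegrals

variable {a c : ℝ}

theorem integrableOn_rpow_div_add (ha₀ : 0 < a) (ha₁ : a < 1) (hc : 0 < c) :
    IntegrableOn (fun t : ℝ => t ^ (a - 1) / (t + c)) (Ioi 0) := by
  have hcont : ContinuousOn (fun t : ℝ => (t + c)⁻¹) (Ioi 0) :=
    ContinuousOn.inv₀ (by fun_prop) fun t ht => (add_pos ht hc).ne'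
  refine mellin_convergent_of_isBigO_scalar (a := 1) (b := 0)
    (hcont.locallyIntegrableOn measurableSet_Ioi) ?_ ha₁ ?_ ha₀
  · refine Asymptotics.IsBigO.of_bound 1 ?_
    filter_upwards [eventually_gt_atTop 0] with t ht
    rw [rpow_neg_one, norm_inv, norm_inv, one_mul, Real.norm_of_nonneg ht.le,
      Real.norm_of_nonneg (add_pos ht hc).le]
    gcongr
    linarith
  · have hlim : Tendsto (fun t : ℝ => (t + c)⁻¹) (𝓝[>] 0) (𝓝 (0 + c)⁻¹) :=
      (((continuous_id.add continuous_const).tendsto 0).inv₀ (by simpa using hc.ne')).mono_left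
        nhdsWithin_le_nhds
    simpa using hlim.isBigO_one ℝ

theorem integral_rpow_mul_exp_neg_add_mul (a : ℝ) {t : ℝ} (h : 0 < t + c) :
    ∫ y in Ioi (0 : ℝ), t ^ (a - 1) * exp (-(t + c) * y) = t ^ (a - 1) / (t + c) := by
  simp only [integral_const_mul, integral_exp_mul_Ioi (neg_neg_of_pos h), mul_zero, exp_zero,
    neg_div_neg_eq, mul_one_div]

theorem integrable_prod_rpow_mul_exp_neg_add_mul (ha₀ : 0 < a) (ha₁ : a < 1) (hc : 0 < c) :
    Integrable (fun p : ℝ × ℝ => p.1 ^ (a - 1) * exp (-(p.1 + c) * p.2))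
      ((volume.restrict (Ioi 0)).prod (volume.restrict (Ioi 0))) := by
  have hmeas : Measurable fun p : ℝ × ℝ => p.1 ^ (a - 1) * exp (-(p.1 + c) * p.2) := by fun_prop
  refine (integrable_prod_iff hmeas.aestronglyMeasurable).2 ⟨?_, ?_⟩
  · filter_upwards [ae_restrict_mem measurableSet_Ioi] with t ht
    exact Integrable.const_mul
      (integrableOn_exp_mul_Ioi (neg_neg_of_pos (add_pos ht hc)) 0) (t ^ (a - 1))
  · refine (integrableOn_rpow_div_add ha₀ ha₁ hc).congr ?_
    filter_upwards [ae_restrict_mem measurableSet_Ioi] with t (ht : 0 < t)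
    have hnorm (y : ℝ) :
        ‖t ^ (a - 1) * exp (-(t + c) * y)‖ = t ^ (a - 1) * exp (-(t + c) * y) :=
      Real.norm_of_nonneg (by positivity)
    simp only [hnorm, integral_rpow_mul_exp_neg_add_mul a (add_pos ht hc)]

theorem integral_rpow_div_add (ha₀ : 0 < a) (ha₁ : a < 1) (hc : 0 < c) :
    ∫ t in Ioi (0 : ℝ), t ^ (a - 1) / (t + c) = c ^ (a - 1) * (π / sin (π * a)) := by
  have houter : ∀ y ∈ Ioi (0 : ℝ), ∫ t in Ioi (0 : ℝ), t ^ (a - 1) * exp (-(t + c) * y) =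
      Gamma a * (y ^ (1 - a - 1) * exp (-(c * y))) := fun y hy => by
    have hy' : (1 / y) ^ a = y ^ (1 - a - 1) := by
      rw [one_div, inv_rpow (le_of_lt hy), ← rpow_neg (le_of_lt hy)]; ring_nf
    have hsplit (t : ℝ) :
        t ^ (a - 1) * exp (-(t + c) * y) = t ^ (a - 1) * exp (-(y * t)) * exp (-(c * y)) := by
      rw [mul_assoc, ← Real.exp_add]
      ring_nf
    simp only [hsplit, integral_mul_const, Real.integral_rpow_mul_exp_neg_mul_Ioi ha₀ hy, hy']
    ring
  calc ∫ t in Ioi (0 : ℝ), t ^ (a - 1) / (t + c)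
      = ∫ t in Ioi (0 : ℝ), ∫ y in Ioi (0 : ℝ), t ^ (a - 1) * exp (-(t + c) * y) :=
        (setIntegral_congr_fun measurableSet_Ioi fun t ht =>
          integral_rpow_mul_exp_neg_add_mul a (add_pos ht hc)).symm
    _ = ∫ y in Ioi (0 : ℝ), ∫ t in Ioi (0 : ℝ), t ^ (a - 1) * exp (-(t + c) * y) :=
        integral_integral_swap (integrable_prod_rpow_mul_exp_neg_add_mul ha₀ ha₁ hc)
    _ = Gamma a * ((1 / c) ^ (1 - a) * Gamma (1 - a)) := by
        rw [setIntegral_congr_fun measurableSet_Ioi houter, integral_const_mul,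
          Real.integral_rpow_mul_exp_neg_mul_Ioi (sub_pos.2 ha₁) hc]
    _ = c ^ (a - 1) * (Gamma a * Gamma (1 - a)) := by
        rw [one_div, inv_rpow hc.le, ← rpow_neg hc.le, neg_sub]; ring
    _ = c ^ (a - 1) * (π / sin (π * a)) := by rw [Real.Gamma_mul_Gamma_one_sub]

variable {s x : ℝ}

theorem rpow_smul_rpow_div_sq_add (s c : ℝ) {t : ℝ} (ht : 0 < t) :
    t ^ ((2 : ℝ) - 1) • ((t ^ (2 : ℝ)) ^ ((s + 1) / 2 - 1) / (t ^ (2 : ℝ) + c)) =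
      t ^ s / (t ^ 2 + c) := by
  rw [smul_eq_mul, ← mul_div_assoc, ← rpow_mul ht.le, ← rpow_add ht, rpow_two]
  ring_nf

theorem integrableOn_rpow_div_sq_add_sq (hs₀ : -1 < s) (hs₁ : s < 1) (hx : 0 < x) :
    IntegrableOn (fun t : ℝ => t ^ s / (t ^ 2 + x ^ 2)) (Ioi 0) :=
  ((integrableOn_Ioi_comp_rpow_iff' _ two_ne_zero).2 (integrableOn_rpow_div_add
    (a := (s + 1) / 2) (by linarith) (by linarith) (pow_pos hx 2))).congr_fun
    (fun _ ht => rpow_smul_rpow_div_sq_add s (x ^ 2) ht) measurableSet_Ioi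

theorem integral_rpow_div_sq_add_sq (hs₀ : -1 < s) (hs₁ : s < 1) (hx : 0 < x) :
    ∫ t in Ioi (0 : ℝ), t ^ s / (t ^ 2 + x ^ 2) =
      x ^ (s - 1) * (π / (2 * sin (π * (1 - s) / 2))) := by
  have hsubst : 2 * ∫ t in Ioi (0 : ℝ), t ^ s / (t ^ 2 + x ^ 2) =
      ∫ u in Ioi (0 : ℝ), u ^ ((s + 1) / 2 - 1) / (u + x ^ 2) := by
    rw [← integral_comp_rpow_Ioi_of_pos (g := fun u => u ^ ((s + 1) / 2 - 1) / (u + x ^ 2))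
      two_pos, ← integral_const_mul]
    refine setIntegral_congr_fun measurableSet_Ioi fun t ht => ?_
    rw [mul_smul, rpow_smul_rpow_div_sq_add s (x ^ 2) ht, smul_eq_mul]
  have hpow : (x ^ 2) ^ ((s + 1) / 2 - 1) = x ^ (s - 1) := by
    rw [← rpow_two, ← rpow_mul hx.le]; ring_nf
  have hsin : sin (π * ((s + 1) / 2)) = sin (π * (1 - s) / 2) := by
    rw [← sin_pi_sub]; ring_nf
  rw [integral_rpow_div_add (by linarith) (by linarith) (pow_pos hx 2), hpow, hsin] at hsubst
  rw [← div_div, div_right_comm]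
  linarith

end RpowIntegrals

theorem intervalIntegrable_abs_rpow {r : ℝ} (hr : -1 < r) (a b : ℝ) :
    IntervalIntegrable (fun x : ℝ => |x| ^ r) volume a b := by
  refine intervalIntegrable_of_even (fun x => by rw [abs_neg]) fun x hx => ?_
  refine (intervalIntegral.intervalIntegrable_rpow' hr).congr fun t ht => ?_
  rw [uIoc_of_le hx.le] at ht
  simp only [abs_of_pos ht.1]

/-- The strip `|Im z| < 2π`, on which `0` is the only zero of `exp z - 1`. -/
def expStrip : Set ℂ := {z | |z.im| < 2 * π}

theorem isOpen_expStrip : IsOpen expStrip :=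
  isOpen_lt (continuous_abs.comp Complex.continuous_im) continuous_const

theorem exp_ne_one_of_mem_expStrip {z : ℂ} (hz : z ∈ expStrip) (hz₀ : z ≠ 0) :
    Complex.exp z ≠ 1 := by
  intro h
  obtain ⟨n, rfl⟩ := Complex.exp_eq_one_iff.1 h
  have hn : |(n : ℝ)| * (2 * π) < 1 * (2 * π) := by
    simpa [expStrip, abs_mul, abs_of_pos pi_pos] using hz
  have hn₀ : n = 0 :=
    Int.abs_lt_one_iff.1 (by exact_mod_cast lt_of_mul_lt_mul_right hn two_pi_pos.le)
  simp [hn₀] at hz₀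

theorem ofReal_add_mem_expStrip {z : ℂ} (t : ℝ) (hz : z ∈ expStrip) : (t : ℂ) + z ∈ expStrip := by
  simpa [expStrip] using hz

theorem ofReal_mul_I_mem_expStrip {x : ℝ} (hx : |x| < 2 * π) : (x : ℂ) * Complex.I ∈ expStrip := by
  simpa [expStrip] using hx

/-- The regular part `1 / (exp z - 1) - 1 / z` of `1 / (exp z - 1)` at its pole `0`. The inner
`dslope` is `(exp z - 1) / z` and the outer one divides its inverse minus `1` by `z`, so that the
value at `0` is the one removing the singularity. -/
noncomputable def invExpSubOneReg : ℂ → ℂ := dslope (fun z => (dslope Complex.exp 0 z)⁻¹) 0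

theorem invExpSubOneReg_of_ne {z : ℂ} (hz : z ≠ 0) :
    invExpSubOneReg z = (Complex.exp z - 1)⁻¹ - z⁻¹ := by
  simp only [invExpSubOneReg, dslope_of_ne _ hz, slope_def_field, dslope_same, Complex.deriv_exp,
    Complex.exp_zero, sub_zero, inv_div, inv_one]
  field_simp

theorem differentiableOn_invExpSubOneReg : DifferentiableOn ℂ invExpSubOneReg expStrip := by
  have hnhds : expStrip ∈ 𝓝 (0 : ℂ) :=
    isOpen_expStrip.mem_nhds (by simp [expStrip, pi_pos])
  have hne : ∀ z ∈ expStrip, dslope Complex.exp 0 z ≠ 0 := fun z hz => by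
    rcases eq_or_ne z 0 with rfl | hz₀
    · simp [dslope_same]
    · rw [dslope_of_ne _ hz₀, slope_def_field, Complex.exp_zero, sub_zero]
      exact div_ne_zero (sub_ne_zero.2 (exp_ne_one_of_mem_expStrip hz hz₀)) hz₀
  have hexp : DifferentiableOn ℂ (dslope Complex.exp 0) expStrip :=
    (Complex.differentiableOn_dslope hnhds).2 Complex.differentiable_exp.differentiableOn
  exact (Complex.differentiableOn_dslope hnhds).2 (hexp.inv hne)

theorem invExpSubOneReg_conj {z : ℂ} (hz : z ≠ 0) :
    invExpSubOneReg (conj z) = conj (invExpSubOneReg z) := by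
  rw [invExpSubOneReg_of_ne hz, invExpSubOneReg_of_ne ((map_ne_zero conj).2 hz)]
  simp only [map_sub, map_inv₀, map_one, Complex.exp_conj]

theorem norm_invExpSubOneReg_le {z : ℂ} (hz : 0 < z.re) : ‖invExpSubOneReg z‖ ≤ 2 / z.re := by
  have hz₀ : z ≠ 0 := by rintro rfl; simp at hz
  have hexp : z.re ≤ ‖Complex.exp z - 1‖ := by
    have := norm_sub_norm_le (Complex.exp z) 1
    rw [Complex.norm_exp, norm_one] at this
    linarith [Real.add_one_le_exp z.re]
  calc ‖invExpSubOneReg z‖ ≤ ‖Complex.exp z - 1‖⁻¹ + ‖z‖⁻¹ := by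
        rw [invExpSubOneReg_of_ne hz₀, ← norm_inv, ← norm_inv]
        exact norm_sub_le _ _
    _ ≤ z.re⁻¹ + z.re⁻¹ := by gcongr; exact Complex.re_le_norm z
    _ = 2 / z.re := by ring

theorem exists_norm_invExpSubOneReg_le (c : ℝ) {b : ℝ} (hb : b < 2 * π) :
    ∃ M : ℝ, 0 ≤ M ∧
      ∀ z : ℂ, c ≤ z.re → |z.im| ≤ b → ‖invExpSubOneReg z‖ ≤ M / (z.re - c + 1) := by
  have hcpt : IsCompact (Icc c 1 ×ℂ Icc (-b) b) := isCompact_Icc.reProdIm isCompact_Icc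
  obtain ⟨C, hC⟩ := hcpt.exists_bound_of_continuousOn
    (differentiableOn_invExpSubOneReg.continuousOn.mono fun z hz =>
      (abs_le.2 (Complex.mem_reProdIm.1 hz).2).trans_lt hb)
  refine ⟨(|C| + 2) * (2 + |c|), by positivity, fun z hre him => ?_⟩
  have hc := neg_abs_le c
  have hc₀ := abs_nonneg c
  rw [le_div_iff₀ (by linarith)]
  rcases le_total z.re 1 with h | h
  · have hz : ‖invExpSubOneReg z‖ ≤ |C| + 2 := by
      have := hC z (Complex.mem_reProdIm.2 ⟨⟨hre, h⟩, abs_le.1 him⟩)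
      linarith [le_abs_self C]
    exact mul_le_mul hz (by linarith) (by linarith) (by positivity)
  · have hpos : 0 < z.re := one_pos.trans_le h
    calc ‖invExpSubOneReg z‖ * (z.re - c + 1) ≤ 2 / z.re * (z.re * (2 + |c|)) :=
          mul_le_mul (norm_invExpSubOneReg_le hpos) (by nlinarith) (by linarith) (by positivity)
      _ = 2 * (2 + |c|) := by field_simp
      _ ≤ (|C| + 2) * (2 + |c|) := by gcongr; linarith [abs_nonneg C]

/-- The Mellin transform at `α` of `t ↦ invExpSubOneReg (t + z)`, as a function of the shift `z`; on
the imaginary axis its real part is the smooth part of the kernel up to a constant. -/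
noncomputable def invExpSubOneRegMellin (α : ℝ) (z : ℂ) : ℂ :=
  ∫ t in Ioi (0 : ℝ), t ^ (α - 1) • invExpSubOneReg (t + z)

theorem invExpSubOneRegMellin_conj (α : ℝ) {z : ℂ} (hz : 0 ≤ z.re) :
    invExpSubOneRegMellin α (conj z) = conj (invExpSubOneRegMellin α z) := by
  rw [invExpSubOneRegMellin, invExpSubOneRegMellin, ← integral_conj]
  refine setIntegral_congr_fun measurableSet_Ioi fun t (ht : 0 < t) => ?_
  have hne : (t : ℂ) + z ≠ 0 := fun h => by
    have := congrArg Complex.re h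
    simp only [Complex.add_re, Complex.ofReal_re, Complex.zero_re] at this
    linarith
  have hconj : (t : ℂ) + conj z = conj ((t : ℂ) + z) := by simp
  simp [hconj, invExpSubOneReg_conj hne, -map_add]

section RegMellin

variable {α : ℝ}

theorem aestronglyMeasurable_rpow_smul_invExpSubOneReg (α : ℝ) {z : ℂ} (hz : z ∈ expStrip) :
    AEStronglyMeasurable (fun t : ℝ => t ^ (α - 1) • invExpSubOneReg (t + z))
      (volume.restrict (Ioi 0)) := by
  have hcont : Continuous fun t : ℝ => invExpSubOneReg (t + z) :=
    differentiableOn_invExpSubOneReg.continuousOn.comp_continuous (by fun_prop)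
      fun t => ofReal_add_mem_expStrip t hz
  have hpow : Measurable fun t : ℝ => t ^ (α - 1) := by fun_prop
  exact hpow.aestronglyMeasurable.smul hcont.aestronglyMeasurable

theorem exists_bound_rpow_smul_invExpSubOneReg (hα₀ : 0 < α) (hα₁ : α < 1) {z : ℂ}
    (hz : z ∈ expStrip) :
    ∃ V ∈ 𝓝 z, ∃ bound : ℝ → ℝ, IntegrableOn bound (Ioi 0) ∧
      ∀ᵐ t : ℝ ∂volume.restrict (Ioi 0), ∀ w ∈ V,
        ‖t ^ (α - 1) • invExpSubOneReg (t + w)‖ ≤ bound t := by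
  obtain ⟨b, hzb, hb⟩ := exists_between (show |z.im| < 2 * π from hz)
  obtain ⟨M, hM₀, hM⟩ := exists_norm_invExpSubOneReg_le (z.re - 1) hb
  have hV : {w : ℂ | z.re - 1 < w.re ∧ |w.im| < b} ∈ 𝓝 z :=
    (Complex.continuous_re.continuousAt.eventually_const_lt (sub_one_lt z.re)).and
      ((continuous_abs.comp Complex.continuous_im).continuousAt.eventually_lt_const hzb)
  refine ⟨_, hV, fun t => t ^ (α - 1) / (t + 1) * M,
    (integrableOn_rpow_div_add hα₀ hα₁ one_pos).mul_const M, ?_⟩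
  filter_upwards [ae_restrict_mem measurableSet_Ioi] with t (ht : 0 < t) w ⟨hre, him⟩
  have hreg : ‖invExpSubOneReg (t + w)‖ ≤ M / (t + 1) := by
    refine (hM (t + w) ?_ ?_).trans ?_
    · rw [Complex.add_re, Complex.ofReal_re]; linarith
    · rw [Complex.add_im, Complex.ofReal_im, zero_add]; exact him.le
    · rw [Complex.add_re, Complex.ofReal_re]; gcongr; linarith
  rw [norm_smul, Real.norm_of_nonneg (by positivity), div_mul_eq_mul_div, mul_div_assoc]
  gcongr

theorem integrableOn_rpow_smul_invExpSubOneReg (hα₀ : 0 < α) (hα₁ : α < 1) {z : ℂ}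
    (hz : z ∈ expStrip) :
    IntegrableOn (fun t : ℝ => t ^ (α - 1) • invExpSubOneReg (t + z)) (Ioi 0) := by
  obtain ⟨V, hV, bound, hbound_int, hbound⟩ :=
    exists_bound_rpow_smul_invExpSubOneReg hα₀ hα₁ hz
  refine hbound_int.mono' (aestronglyMeasurable_rpow_smul_invExpSubOneReg α hz) ?_
  filter_upwards [hbound] with t ht using ht z (mem_of_mem_nhds hV)

theorem differentiableOn_invExpSubOneRegMellin (hα₀ : 0 < α) (hα₁ : α < 1) :
    DifferentiableOn ℂ (invExpSubOneRegMellin α) expStrip := by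
  refine differentiableOn_integral_of_locally_dominated isOpen_expStrip
    (fun z hz => aestronglyMeasurable_rpow_smul_invExpSubOneReg α hz) (ae_of_all _ fun t => ?_)
    fun z hz => exists_bound_rpow_smul_invExpSubOneReg hα₀ hα₁ hz
  exact (differentiableOn_invExpSubOneReg.comp (by fun_prop)
    fun z hz => ofReal_add_mem_expStrip t hz).const_smul (t ^ (α - 1))

end RegMellin

theorem re_inv_exp_sub_one (t x : ℝ) :
    ((Complex.exp (t + x * Complex.I) - 1)⁻¹).re =
      (exp t * cos x - 1) / (1 - 2 * exp t * cos x + exp (2 * t)) := by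
  have hnormSq : Complex.normSq (Complex.exp (t + x * Complex.I) - 1) =
      1 - 2 * exp t * cos x + exp (2 * t) := by
    have hre : (Complex.exp (t + x * Complex.I) - 1).re = exp t * cos x - 1 := by
      simp [Complex.exp_re]
    have him : (Complex.exp (t + x * Complex.I) - 1).im = exp t * sin x := by
      simp [Complex.exp_im]
    rw [Complex.normSq_apply, hre, him, two_mul t, Real.exp_add]
    linear_combination exp t ^ 2 * sin_sq_add_cos_sq x
  rw [Complex.inv_re, hnormSq]
  simp [Complex.exp_re]

theorem rpow_mul_re_inv_exp_sub_one {t : ℝ} (ht : 0 < t) (α x : ℝ) :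
    t ^ (α - 1) * ((Complex.exp (t + x * Complex.I) - 1)⁻¹).re =
      t ^ α / (t ^ 2 + |x| ^ 2) + (t ^ (α - 1) • invExpSubOneReg (t + x * Complex.I)).re := by
  have hne : (t : ℂ) + x * Complex.I ≠ 0 := fun h => ht.ne' (by simpa using congrArg Complex.re h)
  have hinv : ((t + x * Complex.I : ℂ)⁻¹).re = t / (t ^ 2 + |x| ^ 2) := by
    rw [Complex.inv_re, Complex.normSq_add_mul_I, sq_abs]
    simp
  rw [invExpSubOneReg_of_ne hne, Complex.smul_re, Complex.sub_re, hinv, smul_eq_mul,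
    rpow_sub_one ht.ne']
  field_simp
  ring

namespace Kker

theorem eq_integral_re (α : ℝ) {x : ℝ} (hx : |x| < 2 * π) (hx₀ : x ≠ 0) :
    Kker α x = 1 / (π * Gamma α) * ∫ t in Ioi (0 : ℝ),
      t ^ (α - 1) * ((Complex.exp (t + x * Complex.I) - 1)⁻¹).re := by
  have hne : ¬∃ k : ℤ, x = 2 * π * k := by
    rintro ⟨k, rfl⟩
    refine exp_ne_one_of_mem_expStrip (ofReal_mul_I_mem_expStrip hx) (by simpa using hx₀) ?_
    exact Complex.exp_eq_one_iff.2 ⟨k, by push_cast; ring⟩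
  simp only [Kker, if_neg hne, re_inv_exp_sub_one, mul_div_assoc]

/-- The function `g` with `K_α(x) = γ_α * |x| ^ (α - 1) + g(x)` for `0 < |x| < 2π`. -/
noncomputable def smoothPart (α x : ℝ) : ℝ :=
  1 / (π * Gamma α) * (invExpSubOneRegMellin α (x * Complex.I)).re

theorem smoothPart_neg (α x : ℝ) : smoothPart α (-x) = smoothPart α x := by
  have hconj : ((-x : ℝ) : ℂ) * Complex.I = conj ((x : ℂ) * Complex.I) := by simp
  rw [smoothPart, hconj, invExpSubOneRegMellin_conj α (by simp), Complex.conj_re, smoothPart]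

section Decomposition

variable {α : ℝ}

theorem analyticOnNhd_smoothPart (hα₀ : 0 < α) (hα₁ : α < 1) :
    AnalyticOnNhd ℝ (smoothPart α) (Ioo (-(2 * π)) (2 * π)) := by
  intro x hx
  have hmellin : AnalyticAt ℝ (invExpSubOneRegMellin α) (x * Complex.I) :=
    ((differentiableOn_invExpSubOneRegMellin hα₀ hα₁).analyticAt (isOpen_expStrip.mem_nhds
      (ofReal_mul_I_mem_expStrip (abs_lt.2 hx)))).restrictScalars
  have hline : AnalyticAt ℝ (fun y : ℝ => (y : ℂ) * Complex.I) x :=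
    (Complex.ofRealCLM.analyticAt x).mul analyticAt_const
  exact analyticAt_const.mul
    ((Complex.reCLM.analyticAt _).comp (hmellin.comp_of_eq hline rfl))

theorem eq_abs_rpow_add_smoothPart (hα₀ : 0 < α) (hα₁ : α < 1) {x : ℝ}
    (hx : |x| < 2 * π) (hx₀ : x ≠ 0) :
    Kker α x =
      1 / (2 * Gamma α * sin (π * (1 - α) / 2)) * |x| ^ (α - 1) + smoothPart α x := by
  have hreg := integrableOn_rpow_smul_invExpSubOneReg hα₀ hα₁ (ofReal_mul_I_mem_expStrip hx)
  have hreg_re : IntegrableOn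
      (fun t : ℝ => (t ^ (α - 1) • invExpSubOneReg (t + x * Complex.I)).re) (Ioi 0) := hreg.re
  have hpole := integrableOn_rpow_div_sq_add_sq (by linarith) hα₁ (abs_pos.2 hx₀)
  have hsplit : ∫ t in Ioi (0 : ℝ), t ^ (α - 1) * ((Complex.exp (t + x * Complex.I) - 1)⁻¹).re =
      |x| ^ (α - 1) * (π / (2 * sin (π * (1 - α) / 2))) +
        (invExpSubOneRegMellin α (x * Complex.I)).re := by
    rw [setIntegral_congr_fun measurableSet_Ioi fun t ht => rpow_mul_re_inv_exp_sub_one ht α x,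
      integral_add hpole hreg_re,
      integral_rpow_div_sq_add_sq (by linarith) hα₁ (abs_pos.2 hx₀)]
    exact congrArg _ (integral_re hreg)
  rw [eq_integral_re α hx hx₀, hsplit, mul_add, smoothPart]
  congr 1
  field_simp

theorem integrableOn_Ioo (hα₀ : 0 < α) (hα₁ : α < 1) :
    IntegrableOn (Kker α) (Ioo (-π) π) := by
  have hπ := pi_pos
  have hsing : IntegrableOn (fun x : ℝ => |x| ^ (α - 1)) (Ioo (-π) π) :=
    ((intervalIntegrable_abs_rpow (by linarith) (-π) π).1).mono_set Ioo_subset_Ioc_self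
  have hsmooth : IntegrableOn (smoothPart α) (Ioo (-π) π) :=
    (((analyticOnNhd_smoothPart hα₀ hα₁).continuousOn.mono
      (Icc_subset_Ioo (by linarith) (by linarith))).integrableOn_Icc).mono_set Ioo_subset_Icc_self
  refine ((hsing.const_mul (1 / (2 * Gamma α * sin (π * (1 - α) / 2)))).add hsmooth).congr ?_
  filter_upwards [ae_restrict_of_ae (Measure.ae_ne volume 0), ae_restrict_mem measurableSet_Ioo]
    with x hx₀ hx
  exact (eq_abs_rpow_add_smoothPart hα₀ hα₁ ((abs_lt.2 hx).trans (by linarith)) hx₀).symm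

end Decomposition

end Kker

/-- For `α ∈ (0,1)`, `K_α` is integrable on `(−π, π)` and equals
`γ_α·|x|^(α−1)` plus an even smooth function there, where
`γ_α = 1/(2 Γ(α) sin(π(1−α)/2))`. -/
theorem statement4 (α : ℝ) (hα : α ∈ Set.Ioo (0:ℝ) 1) :
    MeasureTheory.IntegrableOn (Kker α) (Set.Ioo (-π) π) ∧
    ∃ g : ℝ → ℝ,
      (∀ x ∈ Set.Ioo (-π) π, g (-x) = g x) ∧
      ContDiffOn ℝ (⊤ : ℕ∞) g (Set.Ioo (-π) π) ∧
      ∀ x ∈ Set.Ioo (-π) π, x ≠ 0 →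
        Kker α x =
          (1 / (2 * Real.Gamma α * Real.sin (π * (1 - α) / 2))) * |x| ^ (α - 1) + g x := by
  obtain ⟨hα₀, hα₁⟩ := hα
  have hsub : Ioo (-π) π ⊆ Ioo (-(2 * π)) (2 * π) :=
    Ioo_subset_Ioo (by linarith [pi_pos]) (by linarith [pi_pos])
  refine ⟨Kker.integrableOn_Ioo hα₀ hα₁, Kker.smoothPart α, fun x _ => Kker.smoothPart_neg α x, ?_,
    fun x hx hx₀ => Kker.eq_abs_rpow_add_smoothPart hα₀ hα₁ (abs_lt.2 (hsub hx)) hx₀⟩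
  exact ((Kker.analyticOnNhd_smoothPart hα₀ hα₁).mono hsub).contDiffOn (uniqueDiffOn_Ioo _ _)
end

section
/- Let α ∈ (0,1) and let f : ℝ → ℝ be continuous, 2π-periodic, odd, with ∫_{−π}^{π} f(y) dy = 0, and suppose f(y) ≥ 0 for all y ∈ (−π, 0) and f(y₀) > 0 for some y₀ ∈ (−π, 0). Then for every x ∈ (−π, 0), ∫_{−π}^{π} K_α(x − y)·f(y) dy > 0. Moreover, convolution with K_α preserves parity: if f is even then x ↦ ∫_{−π}^{π} K_α(x − y) f(y) dy is even, and if f is odd then it is odd. -/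
open Real MeasureTheory Set Filter Topology

/-!
Write `c = cos x`. The integrand of `K_α` is `t ^ (α - 1) (P - 1) / 2`, where
`P = (e ^ (2 * t) - 1) / |1 - e ^ t e ^ (i x)| ^ 2` is the Poisson kernel. As `P` is strictly
increasing in `c`, so is `K_α`. For odd `f`, folding the convolution integral onto `(-π, 0)` turns
the kernel into `K_α (x - y) - K_α (x + y)`, and this is positive because
`cos (x - y) - cos (x + y) = 2 sin x sin y > 0` for `x, y ∈ (-π, 0)`.

Integrability comes from interpolating between two lower bounds for the denominator of `P`:
`(t e ^ (t / 2)) ^ 2`, which gives convergence in `t`, and `2 (1 - c)`, which controls the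
singularity at `x = 0`.
-/

section Convolution

/-- The convolution of `K` and `f` over the symmetric interval `[-a, a]`; for `2π`-periodic
functions and `a = π` it is the convolution on the circle. -/
noncomputable def intervalConv (a : ℝ) (K f : ℝ → ℝ) (x : ℝ) : ℝ :=
  ∫ y in (-a)..a, K (x - y) * f y

variable {a x : ℝ} {K f : ℝ → ℝ}

lemma intervalConv_neg (hK : K.Even) :
    intervalConv a K f (-x) = intervalConv a K (f ∘ Neg.neg) x := by
  have h_reflect := intervalIntegral.integral_comp_neg (a := -a) (b := a) fun y ↦ K (-x - y) * f y
  rw [neg_neg] at h_reflect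
  rw [intervalConv, ← h_reflect, intervalConv]
  congr! 2 with y
  rw [Function.comp_apply, ← hK (x - y), neg_sub', sub_neg_eq_add]

lemma intervalConv_even (hK : K.Even) (hf : f.Even) : (intervalConv a K f).Even := fun x ↦ by
  rw [intervalConv_neg hK, show f ∘ Neg.neg = f from funext hf]

lemma intervalConv_odd (hK : K.Even) (hf : f.Odd) : (intervalConv a K f).Odd := fun x ↦ by
  rw [intervalConv_neg hK, intervalConv, intervalConv, ← intervalIntegral.integral_neg]
  simp only [Function.comp_apply, hf.eq, mul_neg]

lemma intervalIntegrable_add_mul_of_odd (hf : f.Odd)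
    (hint : IntervalIntegrable (fun y ↦ K (x - y) * f y) volume (-a) a) :
    IntervalIntegrable (fun y ↦ K (x + y) * f y) volume (-a) a := by
  simpa [hf.eq, Pi.neg_def] using
    ((IntervalIntegrable.iff_comp_neg (by finiteness)).1 hint).symm.neg

lemma intervalConv_eq_integral_sub_of_odd (hf : f.Odd)
    (hint : IntervalIntegrable (fun y ↦ K (x - y) * f y) volume (-a) a) :
    intervalConv a K f x = ∫ y in (-a)..0, (K (x - y) - K (x + y)) * f y := by
  have h_zero_mem : (0 : ℝ) ∈ uIcc (-a) a := by
    rcases le_total 0 a with ha | ha <;> simp [ha]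
  have h_left : uIcc (-a) 0 ⊆ uIcc (-a) a := uIcc_subset_uIcc_left h_zero_mem
  have h_right : uIcc 0 a ⊆ uIcc (-a) a := uIcc_subset_uIcc_right h_zero_mem
  have h_reflect : ∫ y in 0..a, K (x - y) * f y = -∫ y in (-a)..0, K (x + y) * f y := by
    have h := intervalIntegral.integral_comp_neg (a := -a) (b := 0) fun y ↦ K (x - y) * f y
    rw [neg_neg, neg_zero] at h
    rw [← h, ← intervalIntegral.integral_neg]
    simp only [sub_neg_eq_add, hf.eq, mul_neg]
  rw [intervalConv, ← intervalIntegral.integral_add_adjacent_intervals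
    (hint.mono_set h_left) (hint.mono_set h_right), h_reflect, ← sub_eq_add_neg,
    ← intervalIntegral.integral_sub (hint.mono_set h_left)
      ((intervalIntegrable_add_mul_of_odd hf hint).mono_set h_left)]
  simp only [sub_mul]

lemma intervalConv_pos_of_odd (hf : f.Odd)
    (hint : IntervalIntegrable (fun y ↦ K (x - y) * f y) volume (-a) a)
    (hK : ∀ᵐ y ∂volume.restrict (Ioo (-a) 0), K (x + y) < K (x - y))
    (hnonneg : ∀ᵐ y ∂volume.restrict (Ioo (-a) 0), 0 ≤ f y)
    (hpos : 0 < volume (Function.support f ∩ Ioo (-a) 0)) :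
    0 < intervalConv a K f x := by
  have ha : 0 < a := by
    obtain ⟨y, -, hy⟩ := nonempty_of_measure_ne_zero hpos.ne'
    linarith [hy.1, hy.2]
  have h_folded : IntegrableOn (fun y ↦ (K (x - y) - K (x + y)) * f y) (Ioo (-a) 0) := by
    have h := hint.sub (intervalIntegrable_add_mul_of_odd hf hint)
    rw [intervalIntegrable_iff_integrableOn_Ioo_of_le (by linarith)] at h
    simpa only [sub_mul] using h.mono_set (Ioo_subset_Ioo_right ha.le)
  rw [intervalConv_eq_integral_sub_of_odd hf hint, intervalIntegral.integral_of_le (by linarith),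
    integral_Ioc_eq_integral_Ioo, integral_pos_iff_support_of_nonneg_ae _ h_folded]
  · rw [← Measure.restrict_apply' measurableSet_Ioo] at hpos
    refine hpos.trans_le (measure_mono_ae ?_)
    filter_upwards [hK] with y hKy hfy
    exact mul_ne_zero (sub_pos.2 hKy).ne' hfy
  · filter_upwards [hK, hnonneg] with y hKy hfy
    exact mul_nonneg (sub_pos.2 hKy).le hfy

end Convolution

section Denominator

/-- The denominator `|1 - e ^ t e ^ (i θ)| ^ 2` of the integral defining `K_α`, as a function of
`c = cos θ` and `t`. -/
noncomputable def poissonDenom (c t : ℝ) : ℝ := 1 - 2 * exp t * c + exp (2 * t)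

variable {c t : ℝ}

lemma poissonDenom_eq_sq_exp_sub_one_add (c t : ℝ) :
    poissonDenom c t = (exp t - 1) ^ 2 + 2 * exp t * (1 - c) := by
  rw [poissonDenom, two_mul t, exp_add]
  ring

lemma poissonDenom_eq_sq_exp_mul_sub_one_add (c t : ℝ) :
    poissonDenom c t = (exp t * c - 1) ^ 2 + exp t ^ 2 * (1 - c ^ 2) := by
  rw [poissonDenom, two_mul t, exp_add]
  ring

lemma two_mul_one_sub_le_poissonDenom (hc : c ≤ 1) (ht : 0 ≤ t) :
    2 * (1 - c) ≤ poissonDenom c t := by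
  rw [poissonDenom_eq_sq_exp_sub_one_add]
  nlinarith [sq_nonneg (exp t - 1), one_le_exp ht]

lemma poissonDenom_pos (hc : c < 1) (ht : 0 ≤ t) : 0 < poissonDenom c t :=
  (by linarith : 0 < 2 * (1 - c)).trans_le (two_mul_one_sub_le_poissonDenom hc.le ht)

lemma mul_exp_half_le_exp_sub_one (ht : 0 ≤ t) : t * exp (t / 2) ≤ exp t - 1 := by
  have h_sinh : t / 2 ≤ sinh (t / 2) := self_le_sinh_iff.2 (by positivity)
  calc t * exp (t / 2) ≤ 2 * sinh (t / 2) * exp (t / 2) := by gcongr; linarith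
    _ = exp (t / 2 + t / 2) - exp (-(t / 2) + t / 2) := by rw [sinh_eq, exp_add, exp_add]; ring
    _ = exp t - 1 := by rw [add_halves, neg_add_cancel, exp_zero]

lemma sq_mul_exp_half_le_poissonDenom (hc : c ≤ 1) (ht : 0 ≤ t) :
    (t * exp (t / 2)) ^ 2 ≤ poissonDenom c t := by
  calc (t * exp (t / 2)) ^ 2 ≤ (exp t - 1) ^ 2 := by
        gcongr
        exact mul_exp_half_le_exp_sub_one ht
    _ ≤ poissonDenom c t := by
        rw [poissonDenom_eq_sq_exp_sub_one_add]
        have : 0 ≤ 2 * exp t * (1 - c) := mul_nonneg (by positivity) (sub_nonneg.2 hc)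
        linarith

lemma abs_exp_mul_sub_one_le_sqrt_poissonDenom (hc : |c| ≤ 1) :
    |exp t * c - 1| ≤ √(poissonDenom c t) := by
  apply abs_le_sqrt
  rw [poissonDenom_eq_sq_exp_mul_sub_one_add]
  have : 0 ≤ exp t ^ 2 * (1 - c ^ 2) :=
    mul_nonneg (by positivity) (sub_nonneg.2 ((sq_le_one_iff_abs_le_one c).2 hc))
  linarith

end Denominator

lemma inv_le_rpow_mul_rpow {p q d β : ℝ} (hβ₀ : 0 ≤ β) (hβ₁ : β ≤ 1) (hp : 0 < p) (hpd : p ≤ d)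
    (hq : 0 < q) (hqd : q ≤ d) : d⁻¹ ≤ p ^ (-β) * q ^ (β - 1) := by
  have hd : 0 < d := hp.trans_le hpd
  calc d⁻¹ = d ^ (-β) * d ^ (β - 1) := by rw [← rpow_add hd, ← rpow_neg_one]; ring_nf
    _ ≤ p ^ (-β) * q ^ (β - 1) := by
      gcongr ?_ * ?_
      · exact rpow_le_rpow_of_nonpos hp hpd (by linarith)
      · exact rpow_le_rpow_of_nonpos hq hqd (by linarith)

lemma integrableOn_rpow_mul_exp_neg_mul {s r : ℝ} (hs : -1 < s) (hr : 0 < r) :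
    IntegrableOn (fun t ↦ t ^ s * exp (-r * t)) (Ioi 0) := by
  simpa only [rpow_one] using integrableOn_rpow_mul_exp_neg_mul_rpow hs one_pos hr

lemma setIntegral_lt_setIntegral_of_forall_lt {X : Type*} [MeasurableSpace X] {μ : Measure X}
    {s : Set X} {f g : X → ℝ} (hs : MeasurableSet s) (hμs : μ s ≠ 0) (hf : IntegrableOn f s μ)
    (hg : IntegrableOn g s μ) (h : ∀ x ∈ s, f x < g x) :
    ∫ x in s, f x ∂μ < ∫ x in s, g x ∂μ := by
  rw [← sub_pos, ← integral_sub hg hf]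
  refine (setIntegral_pos_iff_support_of_nonneg_ae ?_ (hg.sub hf)).2 ?_
  · exact ae_restrict_of_forall_mem hs fun x hx ↦ (sub_pos.2 (h x hx)).le
  · have h_support : s ⊆ Function.support (g - f) := fun x hx ↦ (sub_pos.2 (h x hx)).ne'
    rwa [inter_eq_self_of_subset_right h_support, pos_iff_ne_zero]

section Integrand

/-- The integrand of `K_α x`, as a function of `c = cos x` and `t`. -/
noncomputable def kkerIntegrand (α c t : ℝ) : ℝ :=
  t ^ (α - 1) * (exp t * c - 1) / poissonDenom c t

variable {α β b c t : ℝ}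

lemma measurable_uncurry_kkerIntegrand (α : ℝ) :
    Measurable (Function.uncurry (kkerIntegrand α)) := by
  unfold Function.uncurry kkerIntegrand poissonDenom
  fun_prop

lemma kkerIntegrand_eq_poisson (α : ℝ) (hc : c < 1) (ht : 0 ≤ t) :
    kkerIntegrand α c t = t ^ (α - 1) * (((exp (2 * t) - 1) / poissonDenom c t - 1) / 2) := by
  have h_denom := (poissonDenom_pos hc ht).ne'
  rw [kkerIntegrand, mul_div_assoc]
  congr 1
  field_simp
  rw [poissonDenom]
  ring

lemma kkerIntegrand_strictMonoOn (α : ℝ) (ht : 0 < t) :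
    StrictMonoOn (kkerIntegrand α · t) (Iio 1) := by
  intro c hc d hd hcd
  have h_denom : poissonDenom d t < poissonDenom c t := by
    unfold poissonDenom
    gcongr
  have h_num : 0 < exp (2 * t) - 1 := sub_pos.2 (one_lt_exp_iff.2 (by positivity))
  have h_pos := poissonDenom_pos hd ht.le
  have : 0 < t ^ (α - 1) := rpow_pos_of_pos ht _
  simp only [kkerIntegrand_eq_poisson α hc ht.le, kkerIntegrand_eq_poisson α hd ht.le]
  gcongr

lemma abs_kkerIntegrand_le (α : ℝ) (hβ₀ : 0 ≤ β) (hβ₁ : β ≤ 1) (hc : -1 ≤ c) (hb : 0 < b)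
    (hbc : b ^ 2 ≤ 2 * (1 - c)) (ht : 0 < t) :
    |kkerIntegrand α c t| ≤ b ^ (β - 1) * (t ^ (α - β - 1) * exp (-(β / 2) * t)) := by
  have hc₁ : c < 1 := by nlinarith
  have h_denom := poissonDenom_pos hc₁ ht.le
  have h_exp_le : t * exp (t / 2) ≤ √(poissonDenom c t) :=
    le_sqrt_of_sq_le (sq_mul_exp_half_le_poissonDenom hc₁.le ht.le)
  have h_le : b ≤ √(poissonDenom c t) :=
    le_sqrt_of_sq_le (hbc.trans (two_mul_one_sub_le_poissonDenom hc₁.le ht.le))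
  calc |kkerIntegrand α c t| = t ^ (α - 1) * (|exp t * c - 1| / poissonDenom c t) := by
        rw [kkerIntegrand, abs_div, abs_mul, abs_of_pos h_denom, abs_of_pos (rpow_pos_of_pos ht _),
          mul_div_assoc]
    _ ≤ t ^ (α - 1) * (√(poissonDenom c t) / poissonDenom c t) := by
        gcongr
        exact abs_exp_mul_sub_one_le_sqrt_poissonDenom (abs_le.2 ⟨hc, hc₁.le⟩)
    _ = t ^ (α - 1) * (√(poissonDenom c t))⁻¹ := by rw [sqrt_div_self', one_div]
    _ ≤ t ^ (α - 1) * ((t * exp (t / 2)) ^ (-β) * b ^ (β - 1)) := by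
        gcongr
        exact inv_le_rpow_mul_rpow hβ₀ hβ₁ (by positivity) h_exp_le hb h_le
    _ = b ^ (β - 1) * (t ^ (α - β - 1) * exp (-(β / 2) * t)) := by
        rw [mul_rpow ht.le (exp_pos _).le, ← exp_mul, sub_right_comm, sub_eq_add_neg (α - 1) β,
          rpow_add ht]
        ring_nf

lemma integrableOn_kkerIntegrand (hα : 0 < α) (hc : -1 ≤ c) (hc₁ : c < 1) :
    IntegrableOn (kkerIntegrand α c) (Ioi 0) := by
  obtain ⟨β, hβ₀, hβ⟩ := exists_between (lt_min hα one_pos)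
  obtain ⟨hβα, hβ₁⟩ := lt_min_iff.1 hβ
  have h_chord : 0 < 2 * (1 - c) := by linarith
  refine Integrable.mono' ((integrableOn_rpow_mul_exp_neg_mul (by linarith : -1 < α - β - 1)
    (half_pos hβ₀)).const_mul (√(2 * (1 - c)) ^ (β - 1)))
    (measurable_uncurry_kkerIntegrand α).of_uncurry_left.aestronglyMeasurable ?_
  filter_upwards [ae_restrict_mem measurableSet_Ioi] with t ht
  exact abs_kkerIntegrand_le α hβ₀.le hβ₁.le hc (sqrt_pos.2 h_chord) (sq_sqrt h_chord.le).le ht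

end Integrand

section Kernel

variable {α β x y : ℝ}

lemma Kker_eq_ite (α x : ℝ) : Kker α x =
    if cos x = 1 then 0 else 1 / (π * Gamma α) * ∫ t in Ioi 0, kkerIntegrand α (cos x) t := by
  have h_iff : (∃ k : ℤ, x = 2 * π * k) ↔ cos x = 1 := by
    rw [cos_eq_one_iff]
    exact exists_congr fun k ↦ by rw [eq_comm, mul_comm (2 * π)]
  simp only [Kker, kkerIntegrand, poissonDenom, h_iff]

lemma Kker_eq_of_cos_lt_one (α : ℝ) (hx : cos x < 1) :
    Kker α x = 1 / (π * Gamma α) * ∫ t in Ioi 0, kkerIntegrand α (cos x) t := by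
  rw [Kker_eq_ite, if_neg hx.ne]

lemma Kker_even (α : ℝ) : (Kker α).Even := fun x ↦ by
  rw [Kker_eq_ite, Kker_eq_ite, cos_neg]

lemma Kker_periodic (α : ℝ) : Function.Periodic (Kker α) (2 * π) := fun x ↦ by
  rw [Kker_eq_ite, Kker_eq_ite, cos_add_two_pi]

lemma measurable_Kker (α : ℝ) : Measurable (Kker α) := by
  have h_integral : Measurable fun c ↦ ∫ t in Ioi 0, kkerIntegrand α c t :=
    (measurable_uncurry_kkerIntegrand α).stronglyMeasurable.integral_prod_right.measurable
  rw [funext (Kker_eq_ite α)]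
  exact .ite (measurableSet_eq_fun measurable_cos measurable_const) measurable_const
    ((h_integral.comp measurable_cos).const_mul _)

lemma one_div_pi_mul_Gamma_pos (hα : 0 < α) : 0 < 1 / (π * Gamma α) :=
  one_div_pos.2 (mul_pos pi_pos (Gamma_pos_of_pos hα))

lemma Kker_lt_Kker_of_cos_lt (hα : 0 < α) (hxy : cos x < cos y) (hy : cos y < 1) :
    Kker α x < Kker α y := by
  have hx := hxy.trans hy
  rw [Kker_eq_of_cos_lt_one α hx, Kker_eq_of_cos_lt_one α hy]
  refine mul_lt_mul_of_pos_left ?_ (one_div_pi_mul_Gamma_pos hα)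
  exact setIntegral_lt_setIntegral_of_forall_lt measurableSet_Ioi (by simp)
    (integrableOn_kkerIntegrand hα (neg_one_le_cos x) hx)
    (integrableOn_kkerIntegrand hα (neg_one_le_cos y) hy)
    fun t ht ↦ kkerIntegrand_strictMonoOn α ht hx hy hxy

lemma Kker_add_lt_Kker_sub (hα : 0 < α) (hx : x ∈ Ioo (-π) 0) (hy : y ∈ Ioo (-π) 0) (hxy : x ≠ y) :
    Kker α (x + y) < Kker α (x - y) := by
  have h_sin : 0 < sin x * sin y := mul_pos_of_neg_of_neg
    (sin_neg_of_neg_of_neg_pi_lt hx.2 hx.1) (sin_neg_of_neg_of_neg_pi_lt hy.2 hy.1)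
  refine Kker_lt_Kker_of_cos_lt hα (by rw [cos_add, cos_sub]; linarith) ?_
  refine (cos_le_one _).lt_of_ne fun h ↦ hxy (sub_eq_zero.1 ?_)
  obtain ⟨⟨hx₁, hx₂⟩, hy₁, hy₂⟩ := And.intro hx hy
  exact (cos_eq_one_iff_of_lt_of_lt (by linarith) (by linarith)).1 h

lemma sq_two_div_pi_mul_le (hx : |x| ≤ π) : (2 / π * x) ^ 2 ≤ 2 * (1 - cos x) := by
  calc (2 / π * x) ^ 2 = 2 * (2 / π ^ 2 * x ^ 2) := by ring
    _ ≤ 2 * (1 - cos x) := by linarith [cos_le_one_sub_mul_cos_sq hx]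

lemma exists_abs_Kker_le_mul_rpow (hβ₀ : 0 < β) (hβ₁ : β ≤ 1) (hβα : β < α) :
    ∃ C, ∀ x ∈ Ioc 0 π, |Kker α x| ≤ C * x ^ (β - 1) := by
  have h_const := one_div_pi_mul_Gamma_pos (hβ₀.trans hβα)
  refine ⟨1 / (π * Gamma α) *
    ((2 / π) ^ (β - 1) * ∫ t in Ioi 0, t ^ (α - β - 1) * exp (-(β / 2) * t)), fun x hx ↦ ?_⟩
  have h_scaled : 0 < 2 / π * x := mul_pos (by positivity) hx.1
  have h_chord : (2 / π * x) ^ 2 ≤ 2 * (1 - cos x) :=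
    sq_two_div_pi_mul_le (by rw [abs_of_pos hx.1]; exact hx.2)
  have h_cos : cos x < 1 := by nlinarith
  have h_dom : IntegrableOn
      (fun t ↦ (2 / π * x) ^ (β - 1) * (t ^ (α - β - 1) * exp (-(β / 2) * t))) (Ioi 0) :=
    (integrableOn_rpow_mul_exp_neg_mul (by linarith) (half_pos hβ₀)).const_mul _
  have h_integral : |∫ t in Ioi 0, kkerIntegrand α (cos x) t| ≤
      ∫ t in Ioi 0, (2 / π * x) ^ (β - 1) * (t ^ (α - β - 1) * exp (-(β / 2) * t)) :=
    norm_integral_le_of_norm_le (f := kkerIntegrand α (cos x)) h_dom <|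
      ae_restrict_of_forall_mem measurableSet_Ioi fun t ht ↦
        abs_kkerIntegrand_le α hβ₀.le hβ₁ (neg_one_le_cos x) h_scaled h_chord ht
  rw [integral_const_mul, mul_rpow (by positivity) hx.1.le] at h_integral
  rw [Kker_eq_of_cos_lt_one α h_cos, abs_mul, abs_of_pos h_const, mul_assoc]
  gcongr
  linarith

lemma intervalIntegrable_Kker (hα : 0 < α) (a b : ℝ) :
    IntervalIntegrable (Kker α) volume a b := by
  obtain ⟨β, hβ₀, hβ⟩ := exists_between (lt_min hα one_pos)
  obtain ⟨hβα, hβ₁⟩ := lt_min_iff.1 hβ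
  obtain ⟨C, hC⟩ := exists_abs_Kker_le_mul_rpow hβ₀ hβ₁.le hβα
  have h_right : IntervalIntegrable (Kker α) volume 0 π := by
    refine ((intervalIntegral.intervalIntegrable_rpow' (by linarith : -1 < β - 1)).const_mul
      C).mono_fun' (measurable_Kker α).aestronglyMeasurable ?_
    rw [uIoc_of_le pi_pos.le]
    exact ae_restrict_of_forall_mem measurableSet_Ioc hC
  have h_left : IntervalIntegrable (Kker α) volume (-π) 0 := by
    simpa [(Kker_even α).eq] using
      ((IntervalIntegrable.iff_comp_neg (by finiteness)).1 h_right).symm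
  refine (Kker_periodic α).intervalIntegrable two_pi_pos.ne' (t := -π) ?_ a b
  rw [two_mul, neg_add_cancel_left]
  exact h_left.trans h_right

lemma intervalIntegrable_Kker_sub_mul {a b : ℝ} {f : ℝ → ℝ} (hα : 0 < α)
    (hf : ContinuousOn f (uIcc a b)) (x : ℝ) :
    IntervalIntegrable (fun y ↦ Kker α (x - y) * f y) volume a b := by
  have h_shift := (intervalIntegrable_Kker hα (x - a) (x - b)).comp_sub_left x
  simp only [sub_sub_cancel] at h_shift
  exact h_shift.mul_continuousOn hf

end Kernel

theorem statement7_general {α : ℝ} (hα : 0 < α) {f : ℝ → ℝ} (hodd : f.Odd)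
    (hint : ∀ x ∈ Ioo (-π) 0, IntervalIntegrable (fun y ↦ Kker α (x - y) * f y) volume (-π) π)
    (hnonneg : ∀ᵐ y ∂volume.restrict (Ioo (-π) 0), 0 ≤ f y)
    (hpos : 0 < volume (Function.support f ∩ Ioo (-π) 0)) :
    (∀ x ∈ Ioo (-π) 0, 0 < intervalConv π (Kker α) f x) ∧
    ∀ g : ℝ → ℝ, (g.Even → (intervalConv π (Kker α) g).Even) ∧
      (g.Odd → (intervalConv π (Kker α) g).Odd) := by
  refine ⟨fun x hx ↦ intervalConv_pos_of_odd hodd (hint x hx) ?_ hnonneg hpos, fun g ↦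
    ⟨intervalConv_even (Kker_even α), intervalConv_odd (Kker_even α)⟩⟩
  filter_upwards [ae_restrict_mem measurableSet_Ioo, ae_restrict_of_ae (Measure.ae_ne volume x)]
    with y hy hyx
  exact Kker_add_lt_Kker_sub hα hx hy hyx.symm

/-- Convolution with `K_α` is strictly positive on `(−π,0)` when
applied to an odd, zero-mean, continuous periodic `f` that is nonnegative on `(−π,0)`
and positive somewhere there; moreover, convolution with `K_α` preserves parity. -/
theorem statement7 (α : ℝ) (hα : α ∈ Set.Ioo (0:ℝ) 1) (f : ℝ → ℝ)
    (hf : Continuous f) (hper : Function.Periodic f (2 * π))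
    (hodd : ∀ y, f (-y) = -f y) (hint : (∫ y in (-π)..π, f y) = 0)
    (hnonneg : ∀ y ∈ Set.Ioo (-π) 0, 0 ≤ f y)
    (hpos : ∃ y₀ ∈ Set.Ioo (-π) 0, 0 < f y₀) :
    (∀ x ∈ Set.Ioo (-π) 0, 0 < ∫ y in (-π)..π, Kker α (x - y) * f y) ∧
    (∀ g : ℝ → ℝ, Continuous g → Function.Periodic g (2 * π) →
      ((∀ y, g (-y) = g y) →
        ∀ x : ℝ, (∫ y in (-π)..π, Kker α (-x - y) * g y)
          = ∫ y in (-π)..π, Kker α (x - y) * g y) ∧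
      ((∀ y, g (-y) = -g y) →
        ∀ x : ℝ, (∫ y in (-π)..π, Kker α (-x - y) * g y)
          = -∫ y in (-π)..π, Kker α (x - y) * g y)) := by
  obtain ⟨y₀, hy₀, hfy₀⟩ := hpos
  have h := statement7_general hα.1 hodd
    (fun x _ ↦ intervalIntegrable_Kker_sub_mul hα.1 hf.continuousOn x)
    (ae_restrict_of_forall_mem measurableSet_Ioo hnonneg)
    ((hf.isOpen_support.inter isOpen_Ioo).measure_pos volume ⟨y₀, hfy₀.ne', hy₀⟩)
  exact ⟨h.1, fun g _ _ ↦ h.2 g⟩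
end

section
/- Let α ∈ (0,1), p > 1 real, c > 0, and let φ be a steady solution with speed c (for either nonlinearity, case abs or case sgn). Let U ⊆ ℝ be an open set such that n′(φ(x)) < c for every x ∈ U. (i) If in addition φ(x) ≠ 0 for every x ∈ U, then φ is infinitely differentiable on U. (ii) If p ≥ 2 is an integer and n(x) = x^p, then φ is infinitely differentiable on U (without assuming φ is nonvanishing on U). -/
open Real MeasureTheory Set Filter Topology

/-- A steady travelling-wave solution of speed `c` with nonlinearity `n`:
a continuous, `2π`-periodic, zero-mean function `φ` satisfying the steady
convolution equation. -/
def IsSteadySolution (α c : ℝ) (n φ : ℝ → ℝ) : Prop :=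
  Continuous φ ∧ Function.Periodic φ (2 * π) ∧
  (∫ y in (-π)..π, φ y) = 0 ∧
  ∀ x : ℝ, (∫ y in (-π)..π, Kker α (x - y) * φ y) =
    c * φ x - n (φ x) + (1 / (2 * π)) * ∫ y in (-π)..π, n (φ y)

/-- Case abs nonlinearity `n(x) = |x|^p`. -/
noncomputable def nAbs (p x : ℝ) : ℝ := |x| ^ p
/-- Case sgn nonlinearity `n(x) = x·|x|^(p-1)`. -/
noncomputable def nSgn (p x : ℝ) : ℝ := x * |x| ^ (p - 1)
/-- Derivative of the case abs nonlinearity, `n′(x) = p·x·|x|^(p-2)`. -/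
noncomputable def nAbs' (p x : ℝ) : ℝ := p * x * |x| ^ (p - 2)
/-- Derivative of the case sgn nonlinearity, `n′(x) = p·|x|^(p-1)`. -/
noncomputable def nSgn' (p x : ℝ) : ℝ := p * |x| ^ (p - 1)

/-!
Up to a constant, `K_α` is the real part of the Bose–Einstein integral `Γ(α) Li_α` on the unit
circle. So it is smooth off `2πℤ`, and for every `a < min α 1` its singularity on `2πℤ` is no worse
than that of `|x|^(a-1)`. Since `K_α(· + h) - K_α` has mean zero, the increments of `K_α * F` at a
point `x` only see `F - F x`; hence `K_α * F` gains any `b < a` derivatives over `F` at the points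
where `F` is Hölder continuous, even if `F` is merely bounded elsewhere.

Where `n′(φ) ≠ c`, the steady equation `K_α * φ = c φ - n(φ) + const` can be solved locally for `φ`,
so that `φ = H(x, K_α * φ)` near `x₀` with `H` smooth. Finitely many Hölder gains make `φ` Lipschitz
near `x₀`, and then `K_α * φ`, hence `φ`, is `C¹` there. For higher derivatives, let `g` be a
continuous periodic function that agrees with `φ'` near `x₀`. As convolution with `K_α` maps
functions vanishing near `x₀` to functions smooth near `x₀`, we have `(K_α * φ)' = K_α * g + r` with
`r` smooth near `x₀`. Differentiating the equation for `φ` gives an equation for `g` of the same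
form, whose right-hand side is as smooth as `φ` already is, and one concludes by induction.
-/

section Polylogarithm

variable {α : ℝ}

/-- The Bose–Einstein integral `∫₀^∞ t^(α-1) w / (e^t - w) dt = Γ(α) Li_α(w)`, of which `Kker α`
is, up to a constant, the real part on the unit circle. -/
noncomputable def polylogIntegral (α : ℝ) (w : ℂ) : ℂ :=
  ∫ t in Ioi (0 : ℝ), (t ^ (α - 1) : ℝ) * (w / ((rexp t : ℂ) - w))

lemma mul_exp_le_norm_exp_sub {t δ : ℝ} {w : ℂ} (ht : 0 ≤ t) (hδ : δ ≤ 1) (hw : w.re ≤ 1 - δ) :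
    δ * rexp t ≤ ‖(rexp t : ℂ) - w‖ := by
  have hre : rexp t - w.re ≤ ‖(rexp t : ℂ) - w‖ := by
    simpa only [Complex.sub_re, Complex.ofReal_re] using Complex.re_le_norm ((rexp t : ℂ) - w)
  nlinarith [one_le_exp ht]

lemma exp_sub_ne_zero {t : ℝ} {w : ℂ} (ht : 0 ≤ t) (hw : w.re < 1) : (rexp t : ℂ) - w ≠ 0 := by
  intro h
  have hre : rexp t - w.re = 0 := congrArg Complex.re h
  linarith [one_le_exp ht]

lemma integrableOn_rpow_mul_exp_neg (hα : 0 < α) {b : ℝ} (hb : 0 < b) :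
    IntegrableOn (fun t : ℝ ↦ t ^ (α - 1) * rexp (-b * t)) (Ioi 0) := by
  simpa using integrableOn_rpow_mul_exp_neg_mul_rpow (p := 1) (by linarith) one_pos hb

lemma aestronglyMeasurable_ofReal_rpow_mul {g : ℝ → ℂ} (hg : Measurable g) (s : ℝ) :
    AEStronglyMeasurable (fun t : ℝ ↦ (t ^ s : ℝ) * g t) (volume.restrict (Ioi 0)) :=
  ((Complex.measurable_ofReal.comp (measurable_id.pow_const s)).mul hg).aestronglyMeasurable

lemma norm_rpow_mul_le {t s B : ℝ} {z : ℂ} (ht : 0 < t) (hz : ‖z‖ ≤ B) :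
    ‖((t ^ s : ℝ) : ℂ) * z‖ ≤ t ^ s * B := by
  rw [norm_mul, Complex.norm_real, norm_of_nonneg (by positivity)]
  gcongr

lemma norm_div_exp_sub_le {t δ : ℝ} {w : ℂ} (ht : 0 ≤ t) (hδ : 0 < δ) (hδ₁ : δ ≤ 1)
    (hw : w.re ≤ 1 - δ) : ‖w / ((rexp t : ℂ) - w)‖ ≤ ‖w‖ / δ * rexp (-1 * t) := by
  rw [norm_div, neg_one_mul, exp_neg, ← div_eq_mul_inv, div_div]
  gcongr
  exact mul_exp_le_norm_exp_sub ht hδ₁ hw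

lemma norm_exp_div_exp_sub_sq_le {t δ : ℝ} {w : ℂ} (ht : 0 ≤ t) (hδ : 0 < δ) (hδ₁ : δ ≤ 1)
    (hw : w.re ≤ 1 - δ) :
    ‖(rexp t : ℂ) / ((rexp t : ℂ) - w) ^ 2‖ ≤ (δ ^ 2)⁻¹ * rexp (-1 * t) := by
  have hexp : (δ ^ 2)⁻¹ * rexp (-1 * t) = rexp t / (δ * rexp t) ^ 2 := by
    rw [neg_one_mul, exp_neg]
    field_simp
  rw [hexp, norm_div, norm_pow, Complex.norm_real, norm_of_nonneg (exp_pos t).le]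
  gcongr
  exact mul_exp_le_norm_exp_sub ht hδ₁ hw

lemma integrableOn_polylogIntegrand (hα : 0 < α) {w : ℂ} (hw : w.re < 1) :
    IntegrableOn (fun t : ℝ ↦ (t ^ (α - 1) : ℝ) * (w / ((rexp t : ℂ) - w))) (Ioi 0) := by
  set δ := min 1 (1 - w.re)
  have hδ : 0 < δ := lt_min one_pos (by linarith)
  have hwδ : w.re ≤ 1 - δ := by linarith [min_le_right 1 (1 - w.re)]
  refine ((integrableOn_rpow_mul_exp_neg hα one_pos).const_mul (‖w‖ / δ)).mono'
    (aestronglyMeasurable_ofReal_rpow_mul (by fun_prop) _)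
    (ae_restrict_of_forall_mem measurableSet_Ioi fun t ht ↦ ?_)
  rw [mul_left_comm]
  exact norm_rpow_mul_le ht (norm_div_exp_sub_le (le_of_lt ht) hδ (min_le_left _ _) hwδ)

lemma hasDerivAt_div_exp_sub {t : ℝ} {w : ℂ} (h : (rexp t : ℂ) - w ≠ 0) :
    HasDerivAt (fun w : ℂ ↦ w / ((rexp t : ℂ) - w)) (rexp t / ((rexp t : ℂ) - w) ^ 2) w := by
  refine ((hasDerivAt_id' w).div ((hasDerivAt_id' w).const_sub (rexp t : ℂ)) h).congr_deriv ?_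
  ring

lemma differentiableAt_polylogIntegral (hα : 0 < α) {w₀ : ℂ} (hw₀ : w₀.re < 1) :
    DifferentiableAt ℂ (polylogIntegral α) w₀ := by
  set δ := min 1 (1 - w₀.re) / 2 with hδ_def
  have hδ : 0 < δ := half_pos (lt_min one_pos (by linarith))
  have hδ₁ : δ ≤ 1 := by linarith [min_le_left 1 (1 - w₀.re)]
  have hball : ∀ w ∈ Metric.ball w₀ δ, w.re ≤ 1 - δ := fun w hw ↦ by
    have hre : w.re - w₀.re ≤ ‖w - w₀‖ := by simpa using Complex.re_le_norm (w - w₀)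
    linarith [mem_ball_iff_norm.1 hw, min_le_right 1 (1 - w₀.re)]
  refine (hasDerivAt_integral_of_dominated_loc_of_deriv_le (Metric.ball_mem_nhds w₀ hδ)
    (F := fun w t ↦ (t ^ (α - 1) : ℝ) * (w / ((rexp t : ℂ) - w)))
    (F' := fun w t ↦ (t ^ (α - 1) : ℝ) * (rexp t / ((rexp t : ℂ) - w) ^ 2))
    (Eventually.of_forall fun w ↦ aestronglyMeasurable_ofReal_rpow_mul (by fun_prop) _)
    (integrableOn_polylogIntegrand hα hw₀)
    (aestronglyMeasurable_ofReal_rpow_mul (by fun_prop) _)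
    (ae_restrict_of_forall_mem measurableSet_Ioi fun t ht w hw ↦
      norm_rpow_mul_le ht (norm_exp_div_exp_sub_sq_le (le_of_lt ht) hδ hδ₁ (hball w hw))) ?_
    (ae_restrict_of_forall_mem measurableSet_Ioi fun t ht w hw ↦ ?_)).2.differentiableAt
  · refine ((integrableOn_rpow_mul_exp_neg hα one_pos).const_mul (δ ^ 2)⁻¹).congr
      (Eventually.of_forall fun t ↦ ?_)
    exact mul_left_comm _ _ _
  · have hw₁ : w.re < 1 := by linarith [hball w hw]
    exact (hasDerivAt_div_exp_sub (exp_sub_ne_zero (le_of_lt ht) hw₁)).const_mul _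

lemma contDiffAt_polylogIntegral (hα : 0 < α) {w₀ : ℂ} (hw₀ : w₀.re < 1) {k : WithTop ℕ∞} :
    ContDiffAt ℂ k (polylogIntegral α) w₀ := by
  have hopen : IsOpen {w : ℂ | w.re < 1} := isOpen_lt Complex.continuous_re continuous_const
  have hdiff : DifferentiableOn ℂ (polylogIntegral α) {w | w.re < 1} := fun w hw ↦
    (differentiableAt_polylogIntegral hα hw).differentiableWithinAt
  exact (hdiff.contDiffOn hopen).contDiffAt (hopen.mem_nhds hw₀)

lemma exp_mul_abs_sin_le_norm_exp_sub {t : ℝ} (ht : 0 ≤ t) (x : ℝ) :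
    rexp t * |sin (x / 2)| ≤ ‖(rexp t : ℂ) - Complex.exp (x * Complex.I)‖ := by
  set w := Complex.exp (x * Complex.I)
  have hw : ‖w‖ = 1 := Complex.norm_exp_ofReal_mul_I x
  have hchord : ‖w - 1‖ = 2 * |sin (x / 2)| := by
    simpa [w, mul_comm] using Complex.norm_exp_I_mul_ofReal_sub_one x
  have hdist : rexp t - 1 ≤ ‖(rexp t : ℂ) - w‖ := by
    simpa [hw, abs_of_pos (exp_pos t)] using norm_sub_norm_le (rexp t : ℂ) w
  have hsplit : (rexp t : ℂ) * (w - 1) = ((rexp t - 1 : ℝ) : ℂ) * w - (rexp t - w) := by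
    push_cast
    ring
  have htri : ‖(rexp t : ℂ) * (w - 1)‖ ≤ (rexp t - 1) + ‖(rexp t : ℂ) - w‖ := by
    rw [hsplit]
    refine (norm_sub_le _ _).trans_eq ?_
    rw [norm_mul, hw, Complex.norm_real, norm_of_nonneg (by linarith [one_le_exp ht]), mul_one]
  rw [norm_mul, hchord, Complex.norm_real, norm_of_nonneg (exp_pos t).le] at htri
  linarith

lemma le_norm_exp_sub (t x : ℝ) : t ≤ ‖(rexp t : ℂ) - Complex.exp (x * Complex.I)‖ := by
  have hdist : rexp t - 1 ≤ ‖(rexp t : ℂ) - Complex.exp (x * Complex.I)‖ := by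
    simpa [Complex.norm_exp_ofReal_mul_I, abs_of_pos (exp_pos t)] using
      norm_sub_norm_le (rexp t : ℂ) (Complex.exp (x * Complex.I))
  linarith [add_one_le_exp t]

lemma inv_norm_exp_sub_le {a t x : ℝ} (ha : 0 ≤ a) (ha₁ : a ≤ 1) (ht : 0 < t)
    (hx : sin (x / 2) ≠ 0) :
    ‖(rexp t : ℂ) - Complex.exp (x * Complex.I)‖⁻¹ ≤
      |sin (x / 2)| ^ (a - 1) * (t ^ (-a) * rexp (-(1 - a) * t)) := by
  set D := ‖(rexp t : ℂ) - Complex.exp (x * Complex.I)‖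
  have hD : 0 < D := ht.trans_le (le_norm_exp_sub t x)
  have hσ : 0 < |sin (x / 2)| := abs_pos.2 hx
  calc D⁻¹ = D ^ (a - 1) * D ^ (-a) := by rw [← rpow_add hD, ← rpow_neg_one]; ring_nf
    _ ≤ (rexp t * |sin (x / 2)|) ^ (a - 1) * t ^ (-a) := by
      gcongr ?_ * ?_
      · exact rpow_le_rpow_of_nonpos (by positivity)
          (exp_mul_abs_sin_le_norm_exp_sub ht.le x) (by linarith)
      · exact rpow_le_rpow_of_nonpos ht (le_norm_exp_sub t x) (by linarith)
    _ = |sin (x / 2)| ^ (a - 1) * (t ^ (-a) * rexp (-(1 - a) * t)) := by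
      rw [mul_rpow (exp_pos t).le hσ.le, ← exp_mul]
      ring_nf

lemma norm_exp_mul_I_sub_le (x y : ℝ) :
    ‖Complex.exp (x * Complex.I) - Complex.exp (y * Complex.I)‖ ≤ |x - y| := by
  have hrot : Complex.exp (x * Complex.I) =
      Complex.exp (y * Complex.I) * Complex.exp (Complex.I * (x - y : ℝ)) := by
    rw [← Complex.exp_add]
    congr 1
    push_cast
    ring
  rw [hrot, ← mul_sub_one, norm_mul, Complex.norm_exp_ofReal_mul_I, one_mul]
  exact Real.norm_exp_I_mul_ofReal_sub_one_le

lemma norm_div_exp_sub_sub_le {a t x y : ℝ} (ha : 0 ≤ a) (ha₁ : a ≤ 1) (ht : 0 < t)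
    (hx : sin (x / 2) ≠ 0) (hy : sin (y / 2) ≠ 0) :
    ‖Complex.exp (x * Complex.I) / (rexp t - Complex.exp (x * Complex.I)) -
        Complex.exp (y * Complex.I) / (rexp t - Complex.exp (y * Complex.I))‖ ≤
      |x - y| * |sin (x / 2)|⁻¹ *
        (|sin (y / 2)| ^ (a - 1) * (t ^ (-a) * rexp (-(1 - a) * t))) := by
  set w := Complex.exp (x * Complex.I)
  set v := Complex.exp (y * Complex.I)
  have hw : 0 < ‖(rexp t : ℂ) - w‖ := ht.trans_le (le_norm_exp_sub t x)
  have hv : 0 < ‖(rexp t : ℂ) - v‖ := ht.trans_le (le_norm_exp_sub t y)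
  have hσ : 0 < |sin (x / 2)| := abs_pos.2 hx
  have hw₀ := norm_pos_iff.1 hw
  have hv₀ := norm_pos_iff.1 hv
  have hdiff : w / (rexp t - w) - v / (rexp t - v) =
      (w - v) * (rexp t / (rexp t - w)) * (rexp t - v : ℂ)⁻¹ := by
    field_simp
    ring
  have hwv : ‖w - v‖ ≤ |x - y| := norm_exp_mul_I_sub_le x y
  have hquot : ‖(rexp t : ℂ) / (rexp t - w)‖ ≤ |sin (x / 2)|⁻¹ := by
    rw [norm_div, Complex.norm_real, norm_of_nonneg (exp_pos t).le, div_le_iff₀ hw,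
      ← div_eq_inv_mul, le_div_iff₀ hσ]
    exact exp_mul_abs_sin_le_norm_exp_sub ht.le x
  rw [hdiff, norm_mul, norm_mul, norm_inv]
  gcongr
  exact inv_norm_exp_sub_le ha ha₁ ht hy

end Polylogarithm

section Kernel

open scoped ContDiff

variable {α : ℝ}

lemma sin_half_eq_zero_iff {x : ℝ} : sin (x / 2) = 0 ↔ ∃ k : ℤ, x = 2 * π * k := by
  rw [sin_eq_zero_iff]
  exact exists_congr fun k ↦ ⟨fun h ↦ by linarith, fun h ↦ by linarith⟩

lemma re_exp_mul_I_lt_one {x : ℝ} (hx : sin (x / 2) ≠ 0) :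
    (Complex.exp (x * Complex.I)).re < 1 := by
  have hcos : cos x = 1 - 2 * sin (x / 2) ^ 2 := by
    rw [sin_sq_eq_half_sub]
    ring_nf
  rw [Complex.exp_ofReal_mul_I_re]
  linarith [sq_pos_of_ne_zero hx]

lemma re_div_exp_sub (t x : ℝ) :
    (Complex.exp (x * Complex.I) / ((rexp t : ℂ) - Complex.exp (x * Complex.I))).re =
      (rexp t * cos x - 1) / (1 - 2 * rexp t * cos x + rexp (2 * t)) := by
  have hnum : cos x * (rexp t - cos x) + sin x * -sin x = rexp t * cos x - 1 := by
    linear_combination -(sin_sq_add_cos_sq x)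
  have hden : Complex.normSq ((rexp t : ℂ) - Complex.exp (x * Complex.I)) =
      1 - 2 * rexp t * cos x + rexp (2 * t) := by
    rw [Complex.normSq_apply, two_mul t, exp_add]
    simp only [Complex.sub_re, Complex.sub_im, Complex.ofReal_re, Complex.ofReal_im,
      Complex.exp_ofReal_mul_I_re, Complex.exp_ofReal_mul_I_im]
    linear_combination sin_sq_add_cos_sq x
  rw [Complex.div_re, hden, ← add_div, ← hnum]
  simp only [Complex.sub_re, Complex.sub_im, Complex.ofReal_re, Complex.ofReal_im,
    Complex.exp_ofReal_mul_I_re, Complex.exp_ofReal_mul_I_im, zero_sub]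

lemma Kker_of_sin_half_eq_zero {x : ℝ} (hx : sin (x / 2) = 0) : Kker α x = 0 :=
  if_pos (sin_half_eq_zero_iff.1 hx)

lemma Kker_of_sin_half_ne_zero (hα : 0 < α) {x : ℝ} (hx : sin (x / 2) ≠ 0) :
    Kker α x =
      1 / (π * Gamma α) * (polylogIntegral α (Complex.exp (x * Complex.I))).re := by
  have hre := integral_re (integrableOn_polylogIntegrand hα (re_exp_mul_I_lt_one hx))
  rw [Kker, if_neg (mt sin_half_eq_zero_iff.2 hx), polylogIntegral]
  refine congrArg _ (Eq.trans ?_ hre)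
  congr 1 with t
  rw [RCLike.re_eq_complex_re, Complex.re_ofReal_mul, re_div_exp_sub, mul_div_assoc]

lemma periodic_Kker (hα : 0 < α) : Function.Periodic (Kker α) (2 * π) := by
  intro x
  have hsin : sin ((x + 2 * π) / 2) = -sin (x / 2) := by
    rw [add_div, mul_div_cancel_left₀ π two_ne_zero, sin_add_pi]
  by_cases hx : sin (x / 2) = 0
  · rw [Kker_of_sin_half_eq_zero hx, Kker_of_sin_half_eq_zero (by rw [hsin, hx, neg_zero])]
  · rw [Kker_of_sin_half_ne_zero hα hx,
      Kker_of_sin_half_ne_zero hα (by rwa [hsin, neg_ne_zero])]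
    push_cast
    exact congrArg (fun w ↦ 1 / (π * Gamma α) * (polylogIntegral α w).re)
      (Complex.exp_mul_I_periodic x)

lemma contDiffAt_Kker (hα : 0 < α) {x₀ : ℝ} (hx₀ : sin (x₀ / 2) ≠ 0) {k : WithTop ℕ∞} :
    ContDiffAt ℝ k (Kker α) x₀ := by
  have hcomplex : ContDiffAt ℂ k (fun z : ℂ ↦ polylogIntegral α (Complex.exp (z * Complex.I)))
      x₀ :=
    (contDiffAt_polylogIntegral hα (re_exp_mul_I_lt_one hx₀)).comp
      (f := fun z ↦ Complex.exp (z * Complex.I)) (x₀ : ℂ)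
      (Complex.contDiff_exp.comp (contDiff_id.mul contDiff_const)).contDiffAt
  have hne : ∀ᶠ x in 𝓝 x₀, sin (x / 2) ≠ 0 :=
    ContinuousAt.eventually_ne (by fun_prop) hx₀
  refine ((contDiffAt_const (c := 1 / (π * Gamma α))).mul
    hcomplex.real_of_complex).congr_of_eventuallyEq ?_
  filter_upwards [hne] with x hx using Kker_of_sin_half_ne_zero hα hx

/-- A `2π`-periodic kernel, smooth away from `2πℤ`, whose singularity on `2πℤ` is no worse than
that of `|x|^(a-1)`: convolution with it gains almost `a` derivatives. The singularity is measured
with the periodic quantity `|sin (x / 2)|`. As `0 ^ (a - 1) = 0` by convention, the first bound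
forces the kernel to vanish on `2πℤ`. -/
structure IsSmoothingKernel (K : ℝ → ℝ) (a : ℝ) : Prop where
  order_pos : 0 < a
  order_lt_one : a < 1
  periodic : Function.Periodic K (2 * π)
  contDiffAt : ∀ {x}, sin (x / 2) ≠ 0 → ContDiffAt ℝ ∞ K x
  exists_bound : ∃ C ≥ 0, (∀ x, |K x| ≤ C * |sin (x / 2)| ^ (a - 1)) ∧
    ∀ x y, sin (x / 2) ≠ 0 → sin (y / 2) ≠ 0 →
      |K x - K y| ≤ C * (|x - y| * |sin (x / 2)|⁻¹ * |sin (y / 2)| ^ (a - 1))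

lemma integrableOn_majorant {a : ℝ} (ha₁ : a < 1) (haα : a < α) :
    IntegrableOn (fun t : ℝ ↦ t ^ (α - 1) * (t ^ (-a) * rexp (-(1 - a) * t))) (Ioi 0) := by
  refine (integrableOn_rpow_mul_exp_neg (sub_pos.2 haα) (sub_pos.2 ha₁)).congr_fun
    (fun t ht ↦ ?_) measurableSet_Ioi
  rw [← mul_assoc, ← rpow_add ht]
  ring_nf

lemma norm_integral_rpow_mul_le {a c : ℝ} (ha₁ : a < 1) (haα : a < α) {g : ℝ → ℂ}
    (hg : ∀ t > 0, ‖g t‖ ≤ c * (t ^ (-a) * rexp (-(1 - a) * t))) :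
    ‖∫ t in Ioi (0 : ℝ), (t ^ (α - 1) : ℝ) * g t‖ ≤
      c * ∫ t in Ioi (0 : ℝ), t ^ (α - 1) * (t ^ (-a) * rexp (-(1 - a) * t)) := by
  rw [← integral_const_mul]
  refine norm_integral_le_of_norm_le ((integrableOn_majorant ha₁ haα).const_mul c)
    (ae_restrict_of_forall_mem measurableSet_Ioi fun t ht ↦ ?_)
  rw [mul_left_comm]
  exact norm_rpow_mul_le ht (hg t ht)

lemma norm_polylogIntegral_exp_le {a x : ℝ} (ha : 0 ≤ a) (ha₁ : a < 1) (haα : a < α)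
    (hx : sin (x / 2) ≠ 0) :
    ‖polylogIntegral α (Complex.exp (x * Complex.I))‖ ≤
      |sin (x / 2)| ^ (a - 1) *
        ∫ t in Ioi (0 : ℝ), t ^ (α - 1) * (t ^ (-a) * rexp (-(1 - a) * t)) :=
  norm_integral_rpow_mul_le ha₁ haα fun t ht ↦ by
    rw [norm_div, Complex.norm_exp_ofReal_mul_I, one_div]
    exact inv_norm_exp_sub_le ha ha₁.le ht hx

lemma norm_polylogIntegral_exp_sub_le {a x y : ℝ} (ha : 0 ≤ a) (ha₁ : a < 1) (haα : a < α)
    (hx : sin (x / 2) ≠ 0) (hy : sin (y / 2) ≠ 0) :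
    ‖polylogIntegral α (Complex.exp (x * Complex.I)) -
        polylogIntegral α (Complex.exp (y * Complex.I))‖ ≤
      |x - y| * |sin (x / 2)|⁻¹ * |sin (y / 2)| ^ (a - 1) *
        ∫ t in Ioi (0 : ℝ), t ^ (α - 1) * (t ^ (-a) * rexp (-(1 - a) * t)) := by
  have hα : 0 < α := ha.trans_lt haα
  rw [polylogIntegral, polylogIntegral, ← integral_sub
    (integrableOn_polylogIntegrand hα (re_exp_mul_I_lt_one hx))
    (integrableOn_polylogIntegrand hα (re_exp_mul_I_lt_one hy))]
  simp only [← mul_sub]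
  refine norm_integral_rpow_mul_le ha₁ haα fun t ht ↦ ?_
  rw [mul_assoc _ (_ ^ (a - 1))]
  exact norm_div_exp_sub_sub_le ha ha₁.le ht hx hy

lemma isSmoothingKernel_Kker {a : ℝ} (ha : 0 < a) (ha₁ : a < 1) (haα : a < α) :
    IsSmoothingKernel (Kker α) a := by
  have hα : 0 < α := ha.trans haα
  set c := 1 / (π * Gamma α)
  set J := ∫ t in Ioi (0 : ℝ), t ^ (α - 1) * (t ^ (-a) * rexp (-(1 - a) * t))
  have hc : 0 ≤ c := by have := Gamma_pos_of_pos hα; positivity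
  have hJ : 0 ≤ J := setIntegral_nonneg measurableSet_Ioi fun t ht ↦ by
    have := le_of_lt (mem_Ioi.1 ht)
    positivity
  refine ⟨ha, ha₁, periodic_Kker hα, fun hx ↦ contDiffAt_Kker hα hx, c * J, by positivity,
    fun x ↦ ?_, fun x y hx hy ↦ ?_⟩
  · by_cases hx : sin (x / 2) = 0
    · rw [Kker_of_sin_half_eq_zero hx, abs_zero]
      positivity
    · rw [Kker_of_sin_half_ne_zero hα hx, abs_mul, abs_of_nonneg hc, mul_assoc, mul_comm J]
      gcongr
      exact (Complex.abs_re_le_norm _).trans (norm_polylogIntegral_exp_le ha.le ha₁ haα hx)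
  · rw [Kker_of_sin_half_ne_zero hα hx, Kker_of_sin_half_ne_zero hα hy, ← mul_sub,
      ← Complex.sub_re, abs_mul, abs_of_nonneg hc, mul_assoc, mul_comm J]
    gcongr
    exact (Complex.abs_re_le_norm _).trans (norm_polylogIntegral_exp_sub_le ha.le ha₁ haα hx hy)

end Kernel

section Singularity

lemma abs_le_pi_mul_abs_sin_half {z : ℝ} (hz : |z| ≤ π) : |z| ≤ π * |sin (z / 2)| := by
  have h := mul_abs_le_abs_sin (x := z / 2) (by rw [abs_div, abs_two]; linarith)
  rw [abs_div, abs_two] at h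
  calc |z| = π * (2 / π * (|z| / 2)) := by field_simp
    _ ≤ π * |sin (z / 2)| := by gcongr

lemma abs_abs_sin_half_add_sub_le (z h : ℝ) :
    |(|sin ((z + h) / 2)| - |sin (z / 2)|)| ≤ |h| / 2 := by
  refine (abs_abs_sub_abs_le_abs_sub _ _).trans ((abs_sin_sub_sin_le _ _).trans_eq ?_)
  rw [← sub_div, add_sub_cancel_left, abs_div, abs_two]

lemma periodic_abs_sin_half_rpow (r : ℝ) :
    Function.Periodic (fun z ↦ |sin (z / 2)| ^ r) (2 * π) := by
  intro z
  simp only [add_div, mul_div_cancel_left₀ π (two_ne_zero' ℝ), sin_add_pi, abs_neg]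

lemma intervalIntegrable_abs_rpow_s11 {r : ℝ} (hr : -1 < r) (u v : ℝ) :
    IntervalIntegrable (fun z : ℝ ↦ |z| ^ r) volume u v := by
  refine intervalIntegrable_of_even (fun z ↦ by rw [abs_neg]) (fun z hz ↦ ?_)
  refine (intervalIntegral.intervalIntegrable_rpow' hr).congr fun y hy ↦ ?_
  rw [uIoc_of_le hz.le] at hy
  rw [abs_of_pos hy.1]

lemma intervalIntegrable_abs_sin_half_rpow {r : ℝ} (hr : -1 < r) (hr₀ : r ≤ 0) (u v : ℝ) :
    IntervalIntegrable (fun z ↦ |sin (z / 2)| ^ r) volume u v := by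
  refine (periodic_abs_sin_half_rpow r).intervalIntegrable two_pi_pos.ne' (t := -π) ?_ u v
  rw [show -π + 2 * π = π by ring]
  refine ((intervalIntegrable_abs_rpow_s11 hr (-π) π).const_mul (π⁻¹ ^ r)).mono_fun
    (Measurable.aestronglyMeasurable (by fun_prop)) ?_
  filter_upwards [ae_restrict_mem measurableSet_uIoc] with z hz
  rw [uIoc_of_le (by linarith [pi_pos])] at hz
  rw [norm_of_nonneg (by positivity), norm_of_nonneg (by positivity),
    ← mul_rpow (by positivity) (by positivity)]
  rcases eq_or_ne z 0 with rfl | hz₀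
  · simp
  · refine rpow_le_rpow_of_nonpos (by positivity) ?_ hr₀
    rw [inv_mul_le_iff₀ pi_pos]
    exact abs_le_pi_mul_abs_sin_half (abs_le.2 ⟨hz.1.le, hz.2⟩)

end Singularity

section PeriodicConvolution

lemma integral_comp_add_right_of_periodic {f : ℝ → ℝ} (hf : Function.Periodic f (2 * π)) (h : ℝ) :
    ∫ z in (-π)..π, f (z + h) = ∫ z in (-π)..π, f z := by
  rw [intervalIntegral.integral_comp_add_right]
  convert hf.intervalIntegral_add_eq (-π + h) (-π) using 2 <;> ring

/-- The convolution of two `2π`-periodic functions over one period. -/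
noncomputable def periodicConv (K F : ℝ → ℝ) (x : ℝ) : ℝ :=
  ∫ y in (-π)..π, K (x - y) * F y

/-- Bounded measurable `2π`-periodic functions, the inputs on which convolution with an integrable
periodic kernel is defined everywhere. -/
structure IsBoundedPeriodic (F : ℝ → ℝ) : Prop where
  measurable : Measurable F
  periodic : Function.Periodic F (2 * π)
  exists_bound : ∃ M, ∀ x, |F x| ≤ M

variable {K F G : ℝ → ℝ}

lemma isBoundedPeriodic_of_continuous (hF : Continuous F) (hper : Function.Periodic F (2 * π)) :
    IsBoundedPeriodic F := by
  obtain ⟨M, hM⟩ := (hper.isBounded_of_continuous two_pi_pos.ne' hF).exists_norm_le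
  exact ⟨hF.measurable, hper, M, fun x ↦ hM _ (mem_range_self x)⟩

lemma IsBoundedPeriodic.sub (hF : IsBoundedPeriodic F) (hG : IsBoundedPeriodic G) :
    IsBoundedPeriodic (F - G) := by
  obtain ⟨M, hM⟩ := hF.exists_bound
  obtain ⟨N, hN⟩ := hG.exists_bound
  exact ⟨hF.measurable.sub hG.measurable, hF.periodic.sub hG.periodic, M + N, fun x ↦
    (abs_sub _ _).trans (add_le_add (hM x) (hN x))⟩

lemma IsBoundedPeriodic.intervalIntegrable_mul_comp_sub (hF : IsBoundedPeriodic F) {k : ℝ → ℝ}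
    {u v : ℝ} (hk : IntervalIntegrable k volume u v) (x : ℝ) :
    IntervalIntegrable (fun z ↦ F (x - z) * k z) volume u v := by
  obtain ⟨M, hM⟩ := hF.exists_bound
  rw [intervalIntegrable_iff] at hk ⊢
  exact hk.bdd_mul (hF.measurable.comp (by fun_prop)).aestronglyMeasurable
    (Eventually.of_forall fun z ↦ hM (x - z))

lemma periodicConv_comm (hK : Function.Periodic K (2 * π)) (hF : Function.Periodic F (2 * π)) :
    periodicConv K F = periodicConv F K := by
  ext x
  have hper : Function.Periodic (fun z ↦ F (x - z) * K z) (2 * π) := by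
    intro z
    simp only [hK z, sub_add_eq_sub_sub, hF.sub_eq]
  have hsub := intervalIntegral.integral_comp_sub_left (fun z ↦ F (x - z) * K z) x
    (a := -π) (b := π)
  simp only [sub_sub_cancel] at hsub
  simp only [periodicConv, mul_comm (K _), hsub]
  convert hper.intervalIntegral_add_eq (x - π) (-π) using 2 <;> ring

lemma periodicConv_sub (hKper : Function.Periodic K (2 * π))
    (hK : IntervalIntegrable K volume (-π) π) (hF : IsBoundedPeriodic F)
    (hG : IsBoundedPeriodic G) :
    periodicConv K (F - G) = periodicConv K F - periodicConv K G := by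
  rw [periodicConv_comm hKper (hF.sub hG).periodic, periodicConv_comm hKper hF.periodic,
    periodicConv_comm hKper hG.periodic]
  ext x
  simp only [periodicConv, Pi.sub_apply, sub_mul]
  exact intervalIntegral.integral_sub (hF.intervalIntegrable_mul_comp_sub hK x)
    (hG.intervalIntegrable_mul_comp_sub hK x)

lemma periodicConv_add_sub (hKper : Function.Periodic K (2 * π))
    (hK : ∀ u v, IntervalIntegrable K volume u v) (hF : IsBoundedPeriodic F) (x h : ℝ) :
    periodicConv K F (x + h) - periodicConv K F x =
      ∫ z in (-π)..π, (F (x - z) - F x) * (K (z + h) - K z) := by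
  have hKh : IntervalIntegrable (fun z ↦ K (z + h)) volume (-π) π := by
    simpa using (hK (-π + h) (π + h)).comp_add_right h
  have hshift : periodicConv K F (x + h) = ∫ z in (-π)..π, F (x - z) * K (z + h) := by
    have hKhper : Function.Periodic (fun z ↦ K (z + h)) (2 * π) := fun z ↦ by
      simp only [add_right_comm z, hKper (z + h)]
    rw [← periodicConv, ← periodicConv_comm hKhper hF.periodic]
    simp only [periodicConv, sub_add_eq_add_sub]
  have hzero : ∫ z in (-π)..π, F x * (K (z + h) - K z) = 0 := by
    rw [intervalIntegral.integral_const_mul, intervalIntegral.integral_sub hKh (hK _ _),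
      integral_comp_add_right_of_periodic hKper, sub_self, mul_zero]
  have hFK := hF.intervalIntegrable_mul_comp_sub (hKh.sub (hK _ _)) x
  simp only [sub_mul]
  rw [intervalIntegral.integral_sub hFK ((hKh.sub (hK _ _)).const_mul _), hzero, sub_zero, hshift,
    periodicConv_comm hKper hF.periodic, periodicConv, ← intervalIntegral.integral_sub
      (hF.intervalIntegrable_mul_comp_sub hKh x) (hF.intervalIntegrable_mul_comp_sub (hK _ _) x)]
  simp only [mul_sub]

lemma hasDerivAt_periodicConv_left {C : NNReal} (hFper : Function.Periodic F (2 * π))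
    (hF : LipschitzWith C F) (hK : IntervalIntegrable K volume (-π) π) (x : ℝ) :
    HasDerivAt (periodicConv F K) (periodicConv (deriv F) K x) x := by
  have hFb := isBoundedPeriodic_of_continuous hF.continuous hFper
  have hKmeas := hK.def'.aestronglyMeasurable
  refine (intervalIntegral.hasDerivAt_integral_of_dominated_loc_of_lip
    (bound := fun z ↦ C * K z) univ_mem (Eventually.of_forall fun x ↦ ?_)
    (hFb.intervalIntegrable_mul_comp_sub hK x) ?_
    (Eventually.of_forall fun z _ ↦ LipschitzWith.lipschitzOnWith ?_) (hK.const_mul _) ?_).2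
  · exact (hF.continuous.comp (by fun_prop)).aestronglyMeasurable.mul hKmeas
  · exact ((measurable_deriv F).comp (by fun_prop)).aestronglyMeasurable.mul hKmeas
  · refine LipschitzWith.of_dist_le_mul fun u v ↦ ?_
    have hlip := hF.dist_le_mul (u - z) (v - z)
    rw [dist_sub_right] at hlip
    rw [Real.dist_eq, ← sub_mul, abs_mul, ← Real.dist_eq, coe_nnabs, abs_mul, NNReal.abs_eq]
    calc dist (F (u - z)) (F (v - z)) * |K z| ≤ C * dist u v * |K z| := by gcongr
      _ = C * |K z| * dist u v := by ring
  · have hdiff : ∀ᵐ z, DifferentiableAt ℝ F (x - z) :=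
      (Measure.measurePreserving_sub_left volume x).quasiMeasurePreserving.ae
        hF.ae_differentiableAt_real
    filter_upwards [hdiff] with z hz _
    exact (hz.hasDerivAt.comp_sub_const x z).mul_const (K z)

end PeriodicConvolution

section HolderGain

lemma rpow_le_rpow_sub_mul_rpow {P H s b : ℝ} (hP : 0 ≤ P) (hPH : P ≤ H) (hs : s ≠ 0)
    (hb : 0 ≤ b) : P ^ s ≤ P ^ (s - b) * H ^ b := by
  rcases hP.eq_or_lt with rfl | hP
  · rw [zero_rpow hs]
    positivity
  · calc P ^ s = P ^ (s - b) * P ^ b := by rw [← rpow_add hP, sub_add_cancel]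
      _ ≤ P ^ (s - b) * H ^ b := by gcongr

lemma two_mul_rpow_le {h b : ℝ} (hh : 0 ≤ h) (hb : b ≤ 1) : (2 * h) ^ b ≤ 2 * h ^ b := by
  rw [mul_rpow zero_le_two hh]
  gcongr
  exact rpow_le_self_of_one_le one_le_two hb

lemma mul_inv_mul_rpow_le {h P b β : ℝ} (hh : 0 < h) (hhP : h ≤ P) (hβb : β + b ≤ 1) :
    h * P⁻¹ * P ^ β ≤ h ^ (β + b) * P ^ (-b) := by
  have hP : 0 < P := hh.trans_le hhP
  calc h * P⁻¹ * P ^ β = h ^ (β + b) * (h ^ (1 - β - b) * P ^ (β - 1)) := by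
        rw [← mul_assoc, ← rpow_add hh, show β + b + (1 - β - b) = 1 by ring, rpow_one,
          rpow_sub_one hP.ne']
        ring
    _ ≤ h ^ (β + b) * (P ^ (1 - β - b) * P ^ (β - 1)) := by
        gcongr
        linarith
    _ = h ^ (β + b) * P ^ (-b) := by
        rw [← rpow_add hP]
        ring_nf

lemma mul_rpow_le_of_le_singularity {k C P Q h s b β : ℝ} (hC : 0 ≤ C) (hh : 0 < h) (hhP : h ≤ P)
    (hPQ : P ≤ 2 * Q) (hβb : β + b ≤ 1) (hk : k ≤ C * (h * Q⁻¹ * P ^ s)) :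
    k * P ^ β ≤ 2 * C * h ^ (β + b) * P ^ (s - b) := by
  have hP : 0 < P := hh.trans_le hhP
  have hQ : Q⁻¹ ≤ 2 * P⁻¹ := by
    rw [← div_eq_mul_inv, ← inv_div]
    gcongr
    linarith
  calc k * P ^ β ≤ C * (h * (2 * P⁻¹) * P ^ s) * P ^ β := by
        gcongr
        exact hk.trans (by gcongr)
    _ = 2 * C * (h * P⁻¹ * P ^ β) * P ^ s := by ring
    _ ≤ 2 * C * (h ^ (β + b) * P ^ (-b)) * P ^ s := by
        gcongr ?_ * ?_ * _
        exact mul_inv_mul_rpow_le hh hhP hβb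
    _ = 2 * C * h ^ (β + b) * P ^ (s - b) := by
        rw [sub_eq_neg_add, rpow_add hP]
        ring

lemma mul_rpow_le_of_singularity_lt {k C P Q h s b β : ℝ} (hC : 0 ≤ C) (hP : 0 ≤ P) (hPh : P < h)
    (hQ : 0 ≤ Q) (hQh : Q ≤ 2 * h) (hs : s ≠ 0) (hb : 0 ≤ b) (hb₁ : b ≤ 1) (hβ : 0 ≤ β)
    (hk : k ≤ C * P ^ s + C * Q ^ s) :
    k * P ^ β ≤ 2 * C * h ^ (β + b) * (P ^ (s - b) + Q ^ (s - b)) := by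
  have hh : 0 < h := hP.trans_lt hPh
  have hPs : P ^ s ≤ P ^ (s - b) * (2 * h) ^ b :=
    rpow_le_rpow_sub_mul_rpow hP (by linarith) hs hb
  have hQs : Q ^ s ≤ Q ^ (s - b) * (2 * h) ^ b := rpow_le_rpow_sub_mul_rpow hQ hQh hs hb
  calc k * P ^ β ≤ (C * (P ^ (s - b) * (2 * h) ^ b) + C * (Q ^ (s - b) * (2 * h) ^ b)) * h ^ β := by
        gcongr
        exact hk.trans (by gcongr)
    _ = C * (2 * h) ^ b * h ^ β * (P ^ (s - b) + Q ^ (s - b)) := by ring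
    _ ≤ C * (2 * h ^ b) * h ^ β * (P ^ (s - b) + Q ^ (s - b)) := by
        gcongr
        exact two_mul_rpow_le hh.le hb₁
    _ = 2 * C * h ^ (β + b) * (P ^ (s - b) + Q ^ (s - b)) := by
        rw [rpow_add hh]
        ring

variable {K F : ℝ → ℝ} {a b β : ℝ}

namespace IsSmoothingKernel

lemma measurable (hK : IsSmoothingKernel K a) : Measurable K := by
  classical
  obtain ⟨C, -, hC, -⟩ := hK.exists_bound
  have hopen : IsOpen {x : ℝ | sin (x / 2) ≠ 0} := isOpen_ne_fun (by fun_prop) continuous_const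
  have hpiece : {x : ℝ | sin (x / 2) ≠ 0}.piecewise K (fun _ ↦ 0) = K := by
    funext x
    by_cases hx : sin (x / 2) = 0
    · have hKx : |K x| ≤ 0 := by
        simpa [hx, zero_rpow (sub_neg.2 hK.order_lt_one).ne] using hC x
      simp [hx, abs_nonpos_iff.1 hKx]
    · simp [hx]
  rw [← hpiece]
  exact ContinuousOn.measurable_piecewise
    (fun x hx ↦ (hK.contDiffAt hx).continuousAt.continuousWithinAt) continuousOn_const
    hopen.measurableSet

lemma intervalIntegrable (hK : IsSmoothingKernel K a) (u v : ℝ) :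
    IntervalIntegrable K volume u v := by
  obtain ⟨C, -, hC, -⟩ := hK.exists_bound
  refine ((intervalIntegrable_abs_sin_half_rpow (r := a - 1) (by linarith [hK.order_pos])
    (by linarith [hK.order_lt_one]) u v).const_mul C).mono_fun
    hK.measurable.aestronglyMeasurable (Eventually.of_forall fun z ↦ ?_)
  exact (hC z).trans (le_abs_self _)

lemma exists_abs_sub_mul_rpow_le (hK : IsSmoothingKernel K a) (hb : 0 ≤ b) (hβ : 0 ≤ β)
    (hβb : β + b ≤ 1) :
    ∃ C ≥ 0, ∀ z h, |K (z + h) - K z| * |sin (z / 2)| ^ β ≤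
      C * |h| ^ (β + b) *
        (|sin (z / 2)| ^ (a - 1 - b) + |sin ((z + h) / 2)| ^ (a - 1 - b)) := by
  obtain ⟨C, hC, hsize, hsub⟩ := hK.exists_bound
  refine ⟨2 * C, by positivity, fun z h ↦ ?_⟩
  rcases eq_or_ne h 0 with rfl | hh
  · simp only [add_zero, sub_self, abs_zero, zero_mul]
    positivity
  have hhalf := abs_le.1 (abs_abs_sin_half_add_sub_le z h)
  have hh₀ : 0 < |h| := abs_pos.2 hh
  rcases le_or_gt |h| |sin (z / 2)| with hnear | hfar
  · have hz : sin (z / 2) ≠ 0 := abs_pos.1 (hh₀.trans_le hnear)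
    have hzh : sin ((z + h) / 2) ≠ 0 := abs_pos.1 (by linarith)
    have hdiff : |K (z + h) - K z| ≤
        C * (|h| * |sin ((z + h) / 2)|⁻¹ * |sin (z / 2)| ^ (a - 1)) := by
      simpa using hsub (z + h) z hzh hz
    refine (mul_rpow_le_of_le_singularity hC hh₀ hnear (by linarith) hβb hdiff).trans ?_
    gcongr
    exact le_add_of_nonneg_right (by positivity)
  · refine mul_rpow_le_of_singularity_lt hC (abs_nonneg _) hfar (abs_nonneg _) (by linarith)
      (by linarith [hK.order_lt_one]) hb (by linarith) hβ ?_
    exact (abs_sub _ _).trans ((add_le_add (hsize _) (hsize _)).trans_eq (add_comm _ _))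

lemma exists_abs_periodicConv_add_sub_le (hK : IsSmoothingKernel K a) (hb : 0 ≤ b) (hba : b < a)
    (hβ : 0 ≤ β) (hβb : β + b ≤ 1) :
    ∃ C ≥ 0, ∀ F, IsBoundedPeriodic F → ∀ A x, (∀ y, |F y - F x| ≤ A * |y - x| ^ β) →
      ∀ h, |periodicConv K F (x + h) - periodicConv K F x| ≤ C * A * |h| ^ (β + b) := by
  obtain ⟨C, hC, hKC⟩ := hK.exists_abs_sub_mul_rpow_le hb hβ hβb
  set S : ℝ → ℝ := fun z ↦ |sin (z / 2)| ^ (a - 1 - b)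
  have hS : ∀ u v, IntervalIntegrable S volume u v := fun u v ↦
    intervalIntegrable_abs_sin_half_rpow (by linarith) (by linarith [hK.order_lt_one]) u v
  set J := ∫ z in (-π)..π, S z
  have hJ : 0 ≤ J := intervalIntegral.integral_nonneg (by linarith [pi_pos]) fun z _ ↦ by
    positivity
  refine ⟨π ^ β * C * (J + J), by positivity, fun F hF A x hFx h ↦ ?_⟩
  have hA : 0 ≤ A := by simpa using (abs_nonneg _).trans (hFx (x + 1))
  have hSh : IntervalIntegrable (fun z ↦ S (z + h)) volume (-π) π := by
    simpa using (hS (-π + h) (π + h)).comp_add_right h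
  have hintegrand : ∀ z ∈ Ioc (-π) π, ‖(F (x - z) - F x) * (K (z + h) - K z)‖ ≤
      A * π ^ β * C * |h| ^ (β + b) * (S z + S (z + h)) := fun z hz ↦ by
    have hFz : |F (x - z) - F x| ≤ A * (π * |sin (z / 2)|) ^ β := by
      refine (hFx _).trans ?_
      rw [sub_sub_cancel_left, abs_neg]
      gcongr
      exact abs_le_pi_mul_abs_sin_half (abs_le.2 ⟨hz.1.le, hz.2⟩)
    calc ‖(F (x - z) - F x) * (K (z + h) - K z)‖
        ≤ A * (π * |sin (z / 2)|) ^ β * |K (z + h) - K z| := by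
          rw [norm_mul, Real.norm_eq_abs, Real.norm_eq_abs]
          gcongr
      _ = A * π ^ β * (|K (z + h) - K z| * |sin (z / 2)| ^ β) := by
          rw [mul_rpow pi_pos.le (abs_nonneg _)]
          ring
      _ ≤ A * π ^ β * (C * |h| ^ (β + b) * (S z + S (z + h))) := by
          exact mul_le_mul_of_nonneg_left (hKC z h) (by positivity)
      _ = _ := by ring
  rw [periodicConv_add_sub hK.periodic hK.intervalIntegrable hF]
  refine (intervalIntegral.norm_integral_le_of_norm_le (by linarith [pi_pos])
    (Eventually.of_forall hintegrand) (((hS _ _).add hSh).const_mul _)).trans_eq ?_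
  rw [intervalIntegral.integral_const_mul, intervalIntegral.integral_add (hS _ _) hSh,
    integral_comp_add_right_of_periodic (periodic_abs_sin_half_rpow _)]
  ring

lemma continuous_periodicConv (hK : IsSmoothingKernel K a) (hF : IsBoundedPeriodic F) :
    Continuous (periodicConv K F) := by
  obtain ⟨M, hM⟩ := hF.exists_bound
  obtain ⟨C, -, hKC⟩ := hK.exists_abs_periodicConv_add_sub_le (b := a / 2) (β := 0)
    (by linarith [hK.order_pos]) (by linarith [hK.order_pos]) le_rfl
    (by linarith [hK.order_lt_one, hK.order_pos])
  refine continuous_iff_continuousAt.2 fun x ↦ tendsto_iff_dist_tendsto_zero.2 ?_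
  have hlim : Tendsto (fun y ↦ C * (M + M) * |y - x| ^ (0 + a / 2)) (𝓝 x) (𝓝 0) := by
    have ha : 0 < 0 + a / 2 := by linarith [hK.order_pos]
    refine Continuous.tendsto' ?_ x 0 (by rw [sub_self, abs_zero, zero_rpow ha.ne', mul_zero])
    exact continuous_const.mul ((continuous_id.sub continuous_const).abs.rpow_const
      fun _ ↦ Or.inr ha.le)
  refine squeeze_zero (fun _ ↦ dist_nonneg) (fun y ↦ ?_) hlim
  have hosc : ∀ y, |F y - F x| ≤ (M + M) * |y - x| ^ (0 : ℝ) := fun y ↦ by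
    rw [rpow_zero, mul_one]
    exact (abs_sub _ _).trans (add_le_add (hM y) (hM x))
  simpa [Real.dist_eq] using hKC F hF (M + M) x hosc (y - x)

end IsSmoothingKernel

end HolderGain

section Localization

open scoped ContDiff

variable {K F f q : ℝ → ℝ} {a x₀ : ℝ}

lemma periodic_deriv {T : ℝ} (hf : Function.Periodic f T) : Function.Periodic (deriv f) T := by
  intro x
  rw [← deriv_comp_add_const, hf.funext]

lemma exists_lipschitzWith_of_periodic (hf : ContDiff ℝ 1 f)
    (hper : Function.Periodic f (2 * π)) : ∃ C, LipschitzWith C f := by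
  obtain ⟨M, hM⟩ := (isBoundedPeriodic_of_continuous hf.continuous_deriv_one
    (periodic_deriv hper)).exists_bound
  exact ⟨M.toNNReal, lipschitzWith_of_nnnorm_deriv_le (hf.differentiable one_ne_zero) fun x ↦
    NNReal.coe_le_coe.1 ((hM x).trans (le_coe_toNNReal M))⟩

lemma isBoundedPeriodic_deriv {C : NNReal} (hper : Function.Periodic f (2 * π))
    (hf : LipschitzWith C f) : IsBoundedPeriodic (deriv f) :=
  ⟨measurable_deriv f, periodic_deriv hper, C, fun _ ↦ norm_deriv_le_of_lipschitz hf⟩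

lemma IsBoundedPeriodic.intervalIntegrable (hF : IsBoundedPeriodic F) (u v : ℝ) :
    IntervalIntegrable F volume u v := by
  obtain ⟨M, hM⟩ := hF.exists_bound
  exact (intervalIntegrable_const (c := M)).mono_fun hF.measurable.aestronglyMeasurable
    (Eventually.of_forall fun x ↦ (hM x).trans (le_abs_self M))

lemma contDiff_periodicConv_left (hf : ContDiff ℝ ∞ f) (hper : Function.Periodic f (2 * π))
    (hK : IntervalIntegrable K volume (-π) π) : ContDiff ℝ ∞ (periodicConv f K) := by
  refine contDiff_infty.2 fun k ↦ ?_
  induction k generalizing f with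
  | zero =>
    obtain ⟨C, hC⟩ := exists_lipschitzWith_of_periodic (hf.of_le (by simp)) hper
    exact contDiff_zero.2 (continuous_iff_continuousAt.2 fun x ↦
      (hasDerivAt_periodicConv_left hper hC hK x).continuousAt)
  | succ k ih =>
    obtain ⟨C, hC⟩ := exists_lipschitzWith_of_periodic (hf.of_le (by simp)) hper
    have hderiv := hasDerivAt_periodicConv_left hper hC hK
    push_cast
    rw [contDiff_succ_iff_deriv, show deriv (periodicConv f K) = periodicConv (deriv f) K from
      funext fun x ↦ (hderiv x).deriv]
    exact ⟨fun x ↦ (hderiv x).differentiableAt, by simp,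
      ih (contDiff_infty_iff_deriv.1 hf).2 (periodic_deriv hper)⟩

lemma exists_periodic_cutoff {p : ℝ → Prop} (hp : Function.Periodic p (2 * π))
    (hx₀ : ∀ᶠ x in 𝓝 x₀, p x) :
    ∃ χ : ℝ → ℝ, ContDiff ℝ ∞ χ ∧ Function.Periodic χ (2 * π) ∧ (∀ x, |χ x| ≤ 1) ∧
      χ =ᶠ[𝓝 x₀] 1 ∧ ∀ x, ¬ p x → χ =ᶠ[𝓝 x] 0 := by
  obtain ⟨ε, hε, hball⟩ := Metric.eventually_nhds_iff.1 hx₀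
  set δ : ℝ := (ε / π) ^ 2 / 4 with hδ
  have hδ₀ : 0 < δ := by positivity
  set s : ℝ → ℝ := fun x ↦ sin ((x - x₀) / 2) ^ 2 with hs
  have hscont : ContDiff ℝ ∞ s := by fun_prop
  have hsper : Function.Periodic s (2 * π) := fun x ↦ by
    simp only [hs, add_sub_right_comm, add_div, mul_div_cancel_left₀ π (two_ne_zero' ℝ),
      sin_add_pi, neg_sq]
  have hfar : ∀ x, ¬ p x → 2 * δ < s x := fun x hx ↦ by
    have hps : Function.Periodic (fun z ↦ (p z, s z)) (2 * π) := fun z ↦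
      Prod.ext (hp z) (hsper z)
    obtain ⟨y, hy, hxy⟩ := hps.exists_mem_Ico two_pi_pos x (x₀ - π)
    obtain ⟨hpxy, hsxy⟩ := Prod.mk.inj hxy
    have hyε : ε ≤ |y - x₀| := not_lt.1 fun h ↦ hx (hpxy ▸ hball h)
    have hyπ : |y - x₀| ≤ π := abs_le.2 ⟨by linarith [hy.1], by linarith [hy.2]⟩
    have hsin : ε / π ≤ |sin ((y - x₀) / 2)| := by
      rw [div_le_iff₀' pi_pos]
      exact hyε.trans (abs_le_pi_mul_abs_sin_half hyπ)
    calc 2 * δ < (ε / π) ^ 2 := by linarith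
      _ ≤ |sin ((y - x₀) / 2)| ^ 2 := by gcongr
      _ = s x := by rw [sq_abs, hsxy]
  refine ⟨fun x ↦ smoothTransition (2 - s x / δ),
    smoothTransition.contDiff.comp (contDiff_const.sub (hscont.div_const δ)),
    fun x ↦ by simp only [hsper x], fun x ↦ ?_, ?_, fun x hx ↦ ?_⟩
  · rw [abs_of_nonneg (smoothTransition.nonneg _)]
    exact smoothTransition.le_one _
  · filter_upwards [hscont.continuous.continuousAt.eventually_lt continuousAt_const
      (show s x₀ < δ by simpa [hs] using hδ₀)] with x hx
    refine smoothTransition.one_of_one_le ?_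
    linarith [(div_lt_one hδ₀).2 hx]
  · filter_upwards [continuousAt_const.eventually_lt hscont.continuous.continuousAt (hfar x hx)]
      with y hy
    refine smoothTransition.zero_of_nonpos ?_
    linarith [(lt_div_iff₀ hδ₀).2 hy]

lemma IsSmoothingKernel.contDiff_one_sub_cutoff_mul (hK : IsSmoothingKernel K a) {χ : ℝ → ℝ}
    (hχ : ContDiff ℝ ∞ χ) (hper : Function.Periodic χ (2 * π)) (hχ₁ : χ =ᶠ[𝓝 0] 1) :
    ContDiff ℝ ∞ fun z ↦ (1 - χ z) * K z := by
  refine contDiff_iff_contDiffAt.2 fun z ↦ ?_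
  by_cases hz : sin (z / 2) = 0
  · obtain ⟨k, rfl⟩ := sin_half_eq_zero_iff.1 hz
    have htendsto : Tendsto (fun w ↦ w - k * (2 * π)) (𝓝 (2 * π * k)) (𝓝 0) :=
      Continuous.tendsto' (by fun_prop) _ _ (by ring)
    refine (contDiffAt_const (c := 0)).congr_of_eventuallyEq ?_
    filter_upwards [htendsto.eventually hχ₁] with w hw
    rw [hper.sub_int_mul_eq k] at hw
    simp [hw]
  · exact (contDiffAt_const.sub hχ.contDiffAt).mul (hK.contDiffAt hz)

-- Near `x₀` the convolution only sees `K` away from its singularity, where it may be replaced by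
-- a globally smooth kernel.
lemma IsSmoothingKernel.contDiffAt_periodicConv_of_eventuallyEq_zero (hK : IsSmoothingKernel K a)
    (hq : IsBoundedPeriodic q) (hq₀ : q =ᶠ[𝓝 x₀] 0) : ContDiffAt ℝ ∞ (periodicConv K q) x₀ := by
  obtain ⟨ε, hε, hqε⟩ := Metric.eventually_nhds_iff.1 hq₀
  have hp : Function.Periodic (fun z ↦ ∀ x, dist x x₀ < ε / 2 → q (x - z) = 0) (2 * π) :=
    fun z ↦ by simp only [← sub_sub, hq.periodic.sub_eq]
  have hp₀ : ∀ᶠ z in 𝓝 0, ∀ x, dist x x₀ < ε / 2 → q (x - z) = 0 := by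
    filter_upwards [Metric.ball_mem_nhds 0 (half_pos hε)] with z hz x hx
    refine hqε ?_
    rw [Metric.mem_ball, Real.dist_eq] at hz
    rw [Real.dist_eq] at hx ⊢
    grind
  obtain ⟨χ, hχ, hχper, -, hχ₁, hχ₀⟩ := exists_periodic_cutoff hp hp₀
  have hκper : Function.Periodic (fun z ↦ (1 - χ z) * K z) (2 * π) := fun z ↦ by
    simp only [hχper z, hK.periodic z]
  refine (contDiff_periodicConv_left (hK.contDiff_one_sub_cutoff_mul hχ hχper hχ₁) hκper
    (hq.intervalIntegrable _ _)).contDiffAt.congr_of_eventuallyEq ?_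
  filter_upwards [Metric.ball_mem_nhds x₀ (half_pos hε)] with x hx
  refine intervalIntegral.integral_congr fun y _ ↦ ?_
  by_cases hy : ∀ u, dist u x₀ < ε / 2 → q (u - (x - y)) = 0
  · simp [show q y = 0 by simpa using hy x hx]
  · simp [(hχ₀ _ hy).eq_of_nhds]

lemma IsSmoothingKernel.exists_hasDerivAt_periodicConv (hK : IsSmoothingKernel K a)
    (hF : IsBoundedPeriodic F) {C : NNReal} (hper : Function.Periodic f (2 * π))
    (hf : LipschitzWith C f) (hfF : f =ᶠ[𝓝 x₀] F) :
    ∃ r, ContDiffAt ℝ ∞ r x₀ ∧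
      ∀ᶠ x in 𝓝 x₀, HasDerivAt (periodicConv K F) (periodicConv K (deriv f) x + r x) x := by
  have hfb := isBoundedPeriodic_of_continuous hf.continuous hper
  have hsmooth : ContDiffAt ℝ ∞ (periodicConv K (F - f)) x₀ :=
    hK.contDiffAt_periodicConv_of_eventuallyEq_zero (hF.sub hfb)
      (hfF.mono fun x hx ↦ by simp [hx])
  refine ⟨deriv (periodicConv K (F - f)), hsmooth.derivWithin (by simp), ?_⟩
  filter_upwards [(hsmooth.of_le (m := 1) (by simp)).eventually (by simp)] with x hx
  have hsplit : periodicConv K F = periodicConv f K + periodicConv K (F - f) := by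
    rw [periodicConv_sub hK.periodic (hK.intervalIntegrable _ _) hF hfb,
      periodicConv_comm hper hK.periodic]
    abel
  rw [hsplit, periodicConv_comm hK.periodic (periodic_deriv hper)]
  exact (hasDerivAt_periodicConv_left hper hf (hK.intervalIntegrable _ _) x).add
    (hx.differentiableAt one_ne_zero).hasDerivAt

lemma periodic_contDiffAt {T : ℝ} {n : WithTop ℕ∞} (hF : Function.Periodic F T) :
    Function.Periodic (ContDiffAt ℝ n F) T := by
  have hshift : ∀ {t x : ℝ}, Function.Periodic F t → ContDiffAt ℝ n F (x + t) →
      ContDiffAt ℝ n F x := fun {t x} ht h ↦ by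
    simpa only [Function.comp_def, ht.funext] using
      h.comp (f := fun y ↦ y + t) x (contDiffAt_id.add contDiffAt_const)
  exact fun x ↦ propext ⟨hshift hF, fun h ↦ hshift hF.neg (by rwa [add_neg_cancel_right])⟩

lemma exists_contDiff_one_eventuallyEq (hF : Function.Periodic F (2 * π))
    (hF₁ : ContDiffAt ℝ 1 F x₀) :
    ∃ f, ContDiff ℝ 1 f ∧ Function.Periodic f (2 * π) ∧ f =ᶠ[𝓝 x₀] F := by
  obtain ⟨χ, hχ, hχper, -, hχ₁, hχ₀⟩ :=
    exists_periodic_cutoff (periodic_contDiffAt hF) (hF₁.eventually (by simp))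
  refine ⟨χ * F, contDiff_iff_contDiffAt.2 fun x ↦ ?_, hχper.mul hF,
    hχ₁.mono fun x hx ↦ by simp [hx]⟩
  by_cases hx : ContDiffAt ℝ 1 F x
  · exact (hχ.of_le (by simp)).contDiffAt.mul hx
  · exact (contDiffAt_const (c := 0)).congr_of_eventuallyEq
      ((hχ₀ x hx).mono fun y hy ↦ by simp [hy])

end Localization

section Bootstrap

open scoped ContDiff

/-- `F` is uniformly `β`-Hölder at the points near `x₀`. The second point `y` is not restricted to
a neighbourhood of `x₀`, since a convolution sees all increments. -/
def IsHolderNear (F : ℝ → ℝ) (x₀ β : ℝ) : Prop :=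
  ∃ A, ∀ᶠ x in 𝓝 x₀, ∀ y, |F y - F x| ≤ A * |y - x| ^ β

variable {K F : ℝ → ℝ} {H : ℝ × ℝ → ℝ} {a b x₀ β : ℝ}

lemma isHolderNear_zero (hF : IsBoundedPeriodic F) : IsHolderNear F x₀ 0 := by
  obtain ⟨M, hM⟩ := hF.exists_bound
  refine ⟨M + M, Eventually.of_forall fun x y ↦ ?_⟩
  rw [rpow_zero, mul_one]
  exact (abs_sub _ _).trans (add_le_add (hM y) (hM x))

lemma isHolderNear_of_eventually_prod (hF : IsBoundedPeriodic F) (hβ : 0 ≤ β) {A : ℝ}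
    (h : ∀ᶠ z : ℝ × ℝ in 𝓝 (x₀, x₀), |F z.2 - F z.1| ≤ A * |z.2 - z.1| ^ β) :
    IsHolderNear F x₀ β := by
  obtain ⟨M, hM⟩ := hF.exists_bound
  have hM₀ : 0 ≤ M := (abs_nonneg _).trans (hM 0)
  obtain ⟨ε, hε, hball⟩ := Metric.eventually_nhds_iff.1 h
  have : 0 < (ε / 2) ^ β := by positivity
  refine ⟨max A ((M + M) / (ε / 2) ^ β), ?_⟩
  filter_upwards [Metric.ball_mem_nhds x₀ (half_pos hε)] with x hx y
  rcases lt_or_ge |y - x| (ε / 2) with hyx | hyx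
  · have hy : dist y x₀ < ε :=
      (dist_triangle y x x₀).trans_lt ((add_lt_add hyx hx).trans_eq (add_halves ε))
    refine (hball (y := (x, y)) (max_lt (lt_trans hx (half_lt_self hε)) hy)).trans ?_
    gcongr
    exact le_max_left _ _
  · calc |F y - F x| ≤ M + M := (abs_sub _ _).trans (add_le_add (hM y) (hM x))
      _ = (M + M) / (ε / 2) ^ β * (ε / 2) ^ β := by field_simp
      _ ≤ max A ((M + M) / (ε / 2) ^ β) * |y - x| ^ β := by
          gcongr
          exact le_max_right _ _

lemma IsHolderNear.add_of_eventuallyEq (hK : IsSmoothingKernel K a) (hF : IsBoundedPeriodic F)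
    (hH : ContDiffAt ℝ 1 H (x₀, periodicConv K F x₀))
    (hFH : F =ᶠ[𝓝 x₀] fun x ↦ H (x, periodicConv K F x)) (hb : 0 ≤ b) (hba : b < a)
    (hβ : 0 ≤ β) (hβb : β + b ≤ 1) (hFβ : IsHolderNear F x₀ β) :
    IsHolderNear F x₀ (β + b) := by
  obtain ⟨A, hA⟩ := hFβ
  obtain ⟨C, -, hconv⟩ := hK.exists_abs_periodicConv_add_sub_le hb hba hβ hβb
  obtain ⟨L, s, hs, hL⟩ := hH.exists_lipschitzOnWith
  have hcurve : Continuous fun x ↦ (x, periodicConv K F x) :=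
    continuous_id.prodMk (hK.continuous_periodicConv hF)
  have hgood : ∀ᶠ x in 𝓝 x₀, F x = H (x, periodicConv K F x) ∧ (x, periodicConv K F x) ∈ s ∧
      (∀ y, |F y - F x| ≤ A * |y - x| ^ β) ∧ dist x x₀ < 1 / 2 :=
    hFH.and ((hcurve.continuousAt.eventually_mem hs).and
      (hA.and (Metric.ball_mem_nhds x₀ one_half_pos)))
  refine isHolderNear_of_eventually_prod hF (add_nonneg hβ hb) (A := L * max 1 (C * A)) ?_
  rw [nhds_prod_eq]
  refine (hgood.prod_mk hgood).mono ?_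
  rintro ⟨x, y⟩ ⟨⟨hFx, hxs, hAx, hx⟩, hFy, hys, -, hy⟩
  have hyx : |y - x| ≤ 1 := by
    rw [← Real.dist_eq]
    linarith [dist_triangle_right y x x₀]
  have hid : |y - x| ≤ |y - x| ^ (β + b) := self_le_rpow_of_le_one (abs_nonneg _) hyx hβb
  have hv : |periodicConv K F y - periodicConv K F x| ≤ C * A * |y - x| ^ (β + b) := by
    simpa using hconv F hF A x hAx (y - x)
  calc |F y - F x| ≤ L * max |y - x| |periodicConv K F y - periodicConv K F x| := by
        rw [hFx, hFy]
        exact hL.dist_le_mul _ hys _ hxs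
    _ ≤ L * (max 1 (C * A) * |y - x| ^ (β + b)) := by
        gcongr
        refine max_le (hid.trans ?_) (hv.trans ?_)
        · exact le_mul_of_one_le_left (by positivity) (le_max_left _ _)
        · gcongr
          exact le_max_right _ _
    _ = L * max 1 (C * A) * |y - x| ^ (β + b) := by ring

lemma isHolderNear_one_of_eventuallyEq (hK : IsSmoothingKernel K a) (hF : IsBoundedPeriodic F)
    (hH : ContDiffAt ℝ 1 H (x₀, periodicConv K F x₀))
    (hFH : F =ᶠ[𝓝 x₀] fun x ↦ H (x, periodicConv K F x)) : IsHolderNear F x₀ 1 := by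
  obtain ⟨N, hN⟩ := exists_nat_one_div_lt hK.order_pos
  set b : ℝ := 1 / (N + 1) with hb
  have hb₀ : 0 < b := by positivity
  have hNb : (N + 1) * b = 1 := by rw [hb]; field_simp
  have hsteps : ∀ j : ℕ, j ≤ N + 1 → IsHolderNear F x₀ (j * b) := fun j ↦ by
    induction j with
    | zero => exact fun _ ↦ by simpa using isHolderNear_zero hF
    | succ j ih =>
      intro hj
      have hjN : ((j + 1 : ℕ) : ℝ) * b ≤ (N + 1 : ℕ) * b := by gcongr
      push_cast at hjN ⊢
      rw [add_one_mul] at hjN ⊢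
      exact (ih (by omega)).add_of_eventuallyEq hK hF hH hFH hb₀.le hN (by positivity)
        (hjN.trans_eq hNb)
  simpa [hNb] using hsteps (N + 1) le_rfl

lemma exists_lipschitzWith_mul {χ : ℝ → ℝ} {L : NNReal} {M A : ℝ} (hχ : LipschitzWith L χ)
    (hχ₁ : ∀ x, |χ x| ≤ 1) (hM : ∀ x, |F x| ≤ M) (hA : 0 ≤ A)
    (hF : ∀ x, χ x ≠ 0 → ∀ y, |F y - F x| ≤ A * |y - x|) : ∃ C, LipschitzWith C (χ * F) := by
  have hM₀ : 0 ≤ M := (abs_nonneg _).trans (hM 0)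
  have hlip : ∀ x y, χ x ≠ 0 → dist ((χ * F) y) ((χ * F) x) ≤ (L * M + A) * dist y x :=
      fun x y hx ↦ by
    calc |χ y * F y - χ x * F x| = |(χ y - χ x) * F x + χ y * (F y - F x)| := by ring_nf
      _ ≤ |χ y - χ x| * |F x| + |χ y| * |F y - F x| := by
          rw [← abs_mul, ← abs_mul]
          exact abs_add_le _ _
      _ ≤ (L * |y - x|) * M + 1 * (A * |y - x|) := by
          gcongr
          · exact hχ.dist_le_mul y x
          · exact hM x
          · exact hχ₁ y
          · exact hF x hx y
      _ = (L * M + A) * |y - x| := by ring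
  refine ⟨_, LipschitzWith.of_dist_le' (K := L * M + A) fun x y ↦ ?_⟩
  rcases ne_or_eq (χ y) 0 with hy | hy
  · exact hlip y x hy
  rcases ne_or_eq (χ x) 0 with hx | hx
  · rw [dist_comm, dist_comm x]
    exact hlip x y hx
  · simp only [Pi.mul_apply, hx, hy, zero_mul, dist_self]
    positivity

lemma exists_lipschitzWith_eventuallyEq (hF : IsBoundedPeriodic F) (hF₁ : IsHolderNear F x₀ 1) :
    ∃ f C, LipschitzWith C f ∧ Function.Periodic f (2 * π) ∧ f =ᶠ[𝓝 x₀] F := by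
  obtain ⟨M, hM⟩ := hF.exists_bound
  obtain ⟨A, hA⟩ := hF₁
  simp only [rpow_one] at hA
  have hp : Function.Periodic (fun x ↦ ∀ y, |F y - F x| ≤ A * |y - x|) (2 * π) := fun x ↦ by
    refine propext ((Equiv.addRight (2 * π)).forall_congr_right.symm.trans ?_)
    simp only [Equiv.coe_addRight, hF.periodic _, add_sub_add_right_eq_sub]
  obtain ⟨χ, hχ, hχper, hχle, hχ₁, hχ₀⟩ := exists_periodic_cutoff hp hA
  obtain ⟨L, hL⟩ := exists_lipschitzWith_of_periodic (hχ.of_le (by simp)) hχper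
  have hA₀ : 0 ≤ A := by simpa using (abs_nonneg _).trans (hA.self_of_nhds (x₀ + 1))
  obtain ⟨C, hC⟩ := exists_lipschitzWith_mul hL hχle hM hA₀ fun x hx ↦
    not_not.1 fun hpx ↦ hx (hχ₀ x hpx).eq_of_nhds
  exact ⟨χ * F, C, hC, hχper.mul hF.periodic, hχ₁.mono fun x hx ↦ by simp [hx]⟩

lemma contDiffAt_succ_of_hasDerivAt {E : Type*} [NormedAddCommGroup E] [NormedSpace ℝ E]
    {f f' : ℝ → E} {k : ℕ} (hf : ∀ᶠ x in 𝓝 x₀, HasDerivAt f (f' x) x)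
    (hf' : ContDiffAt ℝ k f' x₀) : ContDiffAt ℝ (k + 1) f x₀ :=
  contDiffAt_succ_iff_hasFDerivAt.2 ⟨fun x ↦ ContinuousLinearMap.toSpanSingleton ℝ (f' x),
    ⟨_, hf, fun _ hx ↦ hx.hasFDerivAt⟩,
    (ContinuousLinearMap.toSpanSingletonCLE (𝕜 := ℝ) (E := E)).contDiff.contDiffAt.comp x₀ hf'⟩

lemma IsSmoothingKernel.contDiffAt_one_periodicConv (hK : IsSmoothingKernel K a)
    (hF : IsBoundedPeriodic F) (hF₁ : IsHolderNear F x₀ 1) :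
    ContDiffAt ℝ 1 (periodicConv K F) x₀ := by
  obtain ⟨f, C, hf, hper, hfF⟩ := exists_lipschitzWith_eventuallyEq hF hF₁
  obtain ⟨r, hr, hderiv⟩ := hK.exists_hasDerivAt_periodicConv hF hper hf hfF
  have hcont := hK.continuous_periodicConv (isBoundedPeriodic_deriv hper hf)
  simpa using contDiffAt_succ_of_hasDerivAt (k := 0) hderiv
    ((contDiff_zero.2 hcont).contDiffAt.add (hr.of_le (by simp)))

lemma IsSmoothingKernel.exists_continuous_hasDerivAt (hK : IsSmoothingKernel K a)
    (hF : IsBoundedPeriodic F) (hF₁ : ContDiffAt ℝ 1 F x₀) :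
    ∃ g r, Continuous g ∧ Function.Periodic g (2 * π) ∧ ContDiffAt ℝ ∞ r x₀ ∧
      (∀ᶠ x in 𝓝 x₀, HasDerivAt F (g x) x) ∧
      ∀ᶠ x in 𝓝 x₀, HasDerivAt (periodicConv K F) (periodicConv K g x + r x) x := by
  obtain ⟨f, hf, hper, hfF⟩ := exists_contDiff_one_eventuallyEq hF.periodic hF₁
  obtain ⟨C, hC⟩ := exists_lipschitzWith_of_periodic hf hper
  obtain ⟨r, hr, hderiv⟩ := hK.exists_hasDerivAt_periodicConv hF hper hC hfF
  refine ⟨deriv f, r, hf.continuous_deriv_one, periodic_deriv hper, hr, ?_, hderiv⟩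
  filter_upwards [hfF.eventuallyEq_nhds] with x hx
  exact (hf.differentiable one_ne_zero x).hasDerivAt.congr_of_eventuallyEq hx.symm

lemma IsSmoothingKernel.contDiffAt_periodicConv (hK : IsSmoothingKernel K a) (k : ℕ)
    (hF : IsBoundedPeriodic F) (hFk : ContDiffAt ℝ k F x₀) :
    ContDiffAt ℝ k (periodicConv K F) x₀ := by
  induction k generalizing F with
  | zero => exact (contDiff_zero.2 (hK.continuous_periodicConv hF)).contDiffAt
  | succ k ih =>
    push_cast at hFk ⊢
    obtain ⟨g, r, hg, hper, hr, hFg, hderiv⟩ :=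
      hK.exists_continuous_hasDerivAt hF (hFk.of_le le_add_self)
    have hgk : ContDiffAt ℝ k g x₀ := (hFk.derivWithin le_rfl).congr_of_eventuallyEq
      (hFg.mono fun x hx ↦ hx.deriv.symm)
    exact contDiffAt_succ_of_hasDerivAt hderiv
      ((ih (isBoundedPeriodic_of_continuous hg hper) hgk).add (contDiffAt_infty.1 hr k))

lemma contDiffAt_succ_of_eventuallyEq_periodicConv (hK : IsSmoothingKernel K a) (k : ℕ)
    (hF : IsBoundedPeriodic F) (hH : ContDiffAt ℝ (k + 1) H (x₀, periodicConv K F x₀))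
    (hFH : F =ᶠ[𝓝 x₀] fun x ↦ H (x, periodicConv K F x)) : ContDiffAt ℝ (k + 1) F x₀ := by
  induction k generalizing F H with
  | zero =>
    rw [Nat.cast_zero, zero_add] at hH ⊢
    exact (hH.comp x₀ (contDiffAt_id.prodMk (hK.contDiffAt_one_periodicConv hF
      (isHolderNear_one_of_eventuallyEq hK hF hH hFH)))).congr_of_eventuallyEq hFH
  | succ k ih =>
    push_cast at hH ⊢
    have hFk : ContDiffAt ℝ (k + 1) F x₀ := ih hF (hH.of_le le_self_add) hFH
    obtain ⟨g, r, hg, hper, hr, hFg, hderiv⟩ :=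
      hK.exists_continuous_hasDerivAt hF (hFk.of_le le_add_self)
    have hcurve : ContDiffAt ℝ (k + 1) (fun x ↦ (x, periodicConv K F x)) x₀ :=
      contDiffAt_id.prodMk (hK.contDiffAt_periodicConv (k + 1) hF hFk)
    have hgH : g =ᶠ[𝓝 x₀] fun x ↦
        fderiv ℝ H (x, periodicConv K F x) (1, periodicConv K g x + r x) := by
      filter_upwards [hFH.eventuallyEq_nhds, hFg, hderiv,
        hcurve.continuousAt.eventually ((hH.of_le (m := 1) le_add_self).eventually (by simp))]
        with x hFHx hFgx hderivx hHx
      exact hFgx.unique (((hHx.differentiableAt one_ne_zero).hasFDerivAt.comp_hasDerivAt x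
        ((hasDerivAt_id x).prodMk hderivx)).congr_of_eventuallyEq hFHx)
    have hgk : ContDiffAt ℝ (k + 1) g x₀ := by
      refine ih (isBoundedPeriodic_of_continuous hg hper) (H := fun z ↦
        fderiv ℝ H (z.1, periodicConv K F z.1) (1, z.2 + r z.1)) ?_ hgH
      exact ((hH.fderiv_right le_rfl).comp (x₀, _) (hcurve.comp (x₀, _) contDiffAt_fst)).clm_apply
        (contDiffAt_const.prodMk (contDiffAt_snd.add
          ((hr.of_le (by exact_mod_cast le_top)).comp (x₀, _) contDiffAt_fst)))
    exact_mod_cast contDiffAt_succ_of_hasDerivAt hFg (k := k + 1) (by exact_mod_cast hgk)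

theorem contDiffAt_infty_of_eventuallyEq_periodicConv (hK : IsSmoothingKernel K a)
    (hF : IsBoundedPeriodic F) (hH : ContDiffAt ℝ ∞ H (x₀, periodicConv K F x₀))
    (hFH : F =ᶠ[𝓝 x₀] fun x ↦ H (x, periodicConv K F x)) : ContDiffAt ℝ ∞ F x₀ :=
  contDiffAt_infty.2 fun k ↦ (contDiffAt_succ_of_eventuallyEq_periodicConv hK k hF
    (hH.of_le (by exact_mod_cast le_top)) hFH).of_le (by simp)

end Bootstrap

section Nonlinearity

open scoped ContDiff

lemma hasDerivAt_nAbs {p : ℝ} (hp : 1 < p) (s : ℝ) : HasDerivAt (nAbs p) (nAbs' p s) s := by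
  rw [nAbs', mul_right_comm]
  exact hasDerivAt_abs_rpow s hp

lemma hasDerivAt_nSgn {p : ℝ} (hp : 1 < p) (s : ℝ) : HasDerivAt (nSgn p) (nSgn' p s) s := by
  rcases eq_or_ne s 0 with rfl | hs
  · have hp₁ : 0 < p - 1 := sub_pos.2 hp
    have hslope : slope (nSgn p) 0 =ᶠ[𝓝[≠] 0] fun t ↦ |t| ^ (p - 1) := by
      filter_upwards [self_mem_nhdsWithin] with t ht
      simp only [slope_def_field, nSgn, zero_mul, sub_zero]
      exact mul_div_cancel_left₀ _ ht
    have hcont : Continuous fun t : ℝ ↦ |t| ^ (p - 1) :=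
      continuous_abs.rpow_const fun _ ↦ Or.inr hp₁.le
    refine hasDerivAt_iff_tendsto_slope.2 (Tendsto.congr' hslope.symm ?_)
    exact (hcont.tendsto' 0 _ (by simp [nSgn', zero_rpow hp₁.ne'])).mono_left nhdsWithin_le_nhds
  · have habs : |s| ≠ 0 := abs_ne_zero.2 hs
    have hpow := (hasDerivAt_abs hs).rpow_const (p := p - 1) (Or.inl habs)
    refine ((hasDerivAt_id s).mul hpow).congr_deriv ?_
    have hsign : s * (SignType.sign s : ℝ) = |s| := self_mul_sign s
    simp only [nSgn', id]
    rw [rpow_sub_one habs (p - 1)]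
    field_simp
    linear_combination (p - 1) * hsign

lemma contDiffAt_nAbs {p s : ℝ} (hs : s ≠ 0) : ContDiffAt ℝ ∞ (nAbs p) s :=
  (contDiffAt_abs hs).rpow_const_of_ne (abs_ne_zero.2 hs)

lemma contDiffAt_nSgn {p s : ℝ} (hs : s ≠ 0) : ContDiffAt ℝ ∞ (nSgn p) s :=
  contDiffAt_id.mul ((contDiffAt_abs hs).rpow_const_of_ne (abs_ne_zero.2 hs))

lemma exists_contDiffAt_left_inverse {G : ℝ → ℝ} {k : WithTop ℕ∞} {s : ℝ}
    (hG : ContDiffAt ℝ k G s) (hk : k ≠ 0) (hG' : deriv G s ≠ 0) :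
    ∃ Φ, ContDiffAt ℝ k Φ (G s) ∧ ∀ᶠ t in 𝓝 s, Φ (G t) = t := by
  have hGs := (hG.differentiableAt hk).hasDerivAt.hasFDerivAt_equiv hG'
  exact ⟨hG.localInverse hGs hk, hG.to_localInverse hGs hk,
    (hG.hasStrictFDerivAt' hGs hk).eventually_left_inverse⟩

end Nonlinearity

open scoped ContDiff in
theorem statement11_general {α c x₀ : ℝ} (hα : 0 < α) {n φ : ℝ → ℝ}
    (hφ : IsSteadySolution α c n φ) (hn : ContDiffAt ℝ ∞ n (φ x₀)) (hc : deriv n (φ x₀) ≠ c) :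
    ContDiffAt ℝ ∞ φ x₀ := by
  obtain ⟨hcont, hper, -, hsteady⟩ := hφ
  set κ := 1 / (2 * π) * ∫ y in (-π)..π, n (φ y)
  set G : ℝ → ℝ := fun s ↦ c * s - n s + κ
  have hφG : ∀ x, periodicConv (Kker α) φ x = G (φ x) := hsteady
  have hG : ContDiffAt ℝ ∞ G (φ x₀) :=
    ((contDiffAt_const.mul contDiffAt_id).sub hn).add contDiffAt_const
  have hG' : deriv G (φ x₀) ≠ 0 := by
    have hGderiv : HasDerivAt G (c * 1 - deriv n (φ x₀)) (φ x₀) :=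
      (((hasDerivAt_id _).const_mul c).sub
        (hn.differentiableAt (by simp)).hasDerivAt).add_const κ
    rw [hGderiv.deriv, mul_one]
    exact sub_ne_zero.2 hc.symm
  obtain ⟨Φ, hΦ, hΦG⟩ := exists_contDiffAt_left_inverse hG (by simp) hG'
  have hK : IsSmoothingKernel (Kker α) (min (α / 2) (1 / 2)) :=
    isSmoothingKernel_Kker (by positivity) (by norm_num) (by simp [hα])
  refine contDiffAt_infty_of_eventuallyEq_periodicConv hK
    (isBoundedPeriodic_of_continuous hcont hper) (H := fun z ↦ Φ z.2) ?_ ?_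
  · rw [← hφG] at hΦ
    exact hΦ.comp (x₀, _) contDiffAt_snd
  · filter_upwards [hcont.continuousAt.eventually hΦG] with x hx
    rw [hφG, hx]

/-- Smoothness of steady solutions on open sets where `n′(φ) < c`:
(i) if moreover `φ` does not vanish on `U`, then `φ` is smooth on `U`;
(ii) if `n(x) = x^p` for an integer `p ≥ 2`, then `φ` is smooth on `U` without the
nonvanishing assumption. -/
theorem statement11 (α p c : ℝ) (hα : α ∈ Set.Ioo (0:ℝ) 1) (hp : 1 < p) (hc : 0 < c)
    (n n' : ℝ → ℝ)
    (hn : (n = nAbs p ∧ n' = nAbs' p) ∨ (n = nSgn p ∧ n' = nSgn' p))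
    (φ : ℝ → ℝ) (hφ : IsSteadySolution α c n φ)
    (U : Set ℝ) (hU : IsOpen U) (hlt : ∀ x ∈ U, n' (φ x) < c) :
    ((∀ x ∈ U, φ x ≠ 0) → ContDiffOn ℝ (⊤ : ℕ∞) φ U) ∧
    ((∃ m : ℕ, 2 ≤ m ∧ p = (m : ℝ) ∧ ∀ x : ℝ, n x = x ^ m) → ContDiffOn ℝ (⊤ : ℕ∞) φ U) := by
  have hreg : ∀ s, HasDerivAt n (n' s) s ∧ (s ≠ 0 → ContDiffAt ℝ (⊤ : ℕ∞) n s) := fun s ↦ by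
    rcases hn with ⟨rfl, rfl⟩ | ⟨rfl, rfl⟩
    · exact ⟨hasDerivAt_nAbs hp s, contDiffAt_nAbs⟩
    · exact ⟨hasDerivAt_nSgn hp s, contDiffAt_nSgn⟩
  have hsmooth : ∀ x ∈ U, ContDiffAt ℝ (⊤ : ℕ∞) n (φ x) → ContDiffWithinAt ℝ (⊤ : ℕ∞) φ U x :=
    fun x hx hnx ↦ (statement11_general hα.1 hφ hnx
      ((hreg _).1.deriv.trans_lt (hlt x hx)).ne).contDiffWithinAt
  refine ⟨fun hne x hx ↦ hsmooth x hx ((hreg _).2 (hne x hx)), ?_⟩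
  rintro ⟨m, -, -, hpow⟩ x hx
  exact hsmooth x hx (funext hpow ▸ (contDiff_id.pow m).contDiffAt)
end
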